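/- arXiv:nlin/0401030 — 4 statements merged into one kernel-verified Lean document; each statement's English description precedes it below -/
import Mathlib

section
/- Let n ≥ 2 be a natural number. The real vector space of triples (a, b, c) of real Laurent polynomials such that for every real polynomial f of degree ≤ n the Laurent polynomial a·f'' + b·f' + c·f lies in 𝒫_n (the space of polynomials of degree ≤ n) has dimension 9. Moreover, for n ≥ 4, the analogous spaces of triples preserving 𝒫̂_n = span{1, z², z³, …, z^n} and preserving 𝒫̃_n = span{1, z, …, z^{n−2}, z^n} each have dimension 7. -/
open Polynomial

/-- The span in `ℝ[z]` of the monomials `z^k`, `k ∈ S`. -/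
noncomputable def polyMonomialSpan (S : Finset ℕ) : Submodule ℝ (Polynomial ℝ) :=
  Submodule.span ℝ {p | ∃ k ∈ S, p = Polynomial.X ^ k}

/-- The action of a triple `(a,b,c)` of Laurent polynomials on a polynomial `f`:
`T f = a·f'' + b·f' + c·f`, computed in `ℝ[z,z⁻¹]`. -/
noncomputable def tripleApply
    (t : LaurentPolynomial ℝ × LaurentPolynomial ℝ × LaurentPolynomial ℝ)
    (f : Polynomial ℝ) : LaurentPolynomial ℝ :=
  t.1 * Polynomial.toLaurent (Polynomial.derivative (Polynomial.derivative f)) +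
    t.2.1 * Polynomial.toLaurent (Polynomial.derivative f) +
    t.2.2 * Polynomial.toLaurent f

/-- The space of triples `(a,b,c)` of Laurent polynomials such that
`a·f'' + b·f' + c·f` lies in (the image in `ℝ[z,z⁻¹]` of) `V` for every `f ∈ V`. -/
noncomputable def preservingTriples (V : Submodule ℝ (Polynomial ℝ)) :
    Submodule ℝ (LaurentPolynomial ℝ × LaurentPolynomial ℝ × LaurentPolynomial ℝ) where
  carrier := {t | ∀ f ∈ V,
    tripleApply t f ∈ V.map (Polynomial.toLaurentAlg : Polynomial ℝ →ₐ[ℝ] _).toLinearMap}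
  zero_mem' := by
    intro f hf
    simp only [tripleApply, Prod.fst_zero, Prod.snd_zero, zero_mul, add_zero]
    exact Submodule.zero_mem _
  add_mem' := by
    intro s t hs ht f hf
    have h := Submodule.add_mem _ (hs f hf) (ht f hf)
    convert h using 1
    simp only [tripleApply, Prod.fst_add, Prod.snd_add]
    ring
  smul_mem' := by
    intro r t ht f hf
    have h := Submodule.smul_mem _ r (ht f hf)
    convert h using 1
    simp only [tripleApply, Prod.smul_fst, Prod.smul_snd, smul_add, smul_mul_assoc]

noncomputable def quadVanish (P : ℕ → Prop) : Submodule ℝ (ℝ × ℝ × ℝ) where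
  carrier := {v | ∀ k : ℕ, P k → v.1 * ((k : ℝ) * (k - 1)) + v.2.1 * k + v.2.2 = 0}
  zero_mem' := by intro k _; simp
  add_mem' := by
    intro u v hu hv k hk
    have h1 := hu k hk
    have h2 := hv k hk
    simp only [Prod.fst_add, Prod.snd_add]
    linarith
  smul_mem' := by
    intro r v hv k hk
    have h1 := hv k hk
    simp only [Prod.smul_fst, Prod.smul_snd, smul_eq_mul]
    linear_combination r * h1

theorem mem_quadVanish (P : ℕ → Prop) (v : ℝ × ℝ × ℝ) : v ∈ quadVanish P ↔
    ∀ k : ℕ, P k → v.1 * ((k : ℝ) * (k - 1)) + v.2.1 * k + v.2.2 = 0 := Iff.rfl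

theorem finrank_R3 : Module.finrank ℝ (ℝ × ℝ × ℝ) = 3 := by simp

theorem quadVanish_none (P : ℕ → Prop) (h : ∀ k, ¬ P k) :
    Module.finrank ℝ (quadVanish P) = 3 := by
  have : quadVanish P = ⊤ := by
    rw [eq_top_iff]
    intro v _ k hk
    exact absurd hk (h k)
  rw [this, finrank_top, finrank_R3]

theorem quadVanish_one (P : ℕ → Prop) (x : ℕ) (h : ∀ k, P k ↔ k = x) :
    Module.finrank ℝ (quadVanish P) = 2 := by
  let φ : (ℝ × ℝ × ℝ) →ₗ[ℝ] ℝ :=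
    { toFun := fun v => v.1 * ((x : ℝ) * (x - 1)) + v.2.1 * x + v.2.2
      map_add' := by intro u v; simp only [Prod.fst_add, Prod.snd_add]; ring
      map_smul' := by
        intro r v; simp only [Prod.smul_fst, Prod.smul_snd, smul_eq_mul, RingHom.id_apply]; ring }
  have hk : quadVanish P = LinearMap.ker φ := by
    ext v
    rw [LinearMap.mem_ker, mem_quadVanish]
    constructor
    · intro hv
      exact hv x ((h x).2 rfl)
    · intro hv k hk
      rw [(h k).1 hk]
      exact hv
  have hs : LinearMap.range φ = ⊤ := by
    rw [LinearMap.range_eq_top]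
    intro r
    exact ⟨(0, 0, r), by simp [φ]⟩
  have := LinearMap.finrank_range_add_finrank_ker φ
  rw [hs, finrank_top, finrank_R3, Module.finrank_self] at this
  rw [hk]
  omega

theorem quadVanish_two (P : ℕ → Prop) (x y : ℕ) (hxy : x ≠ y) (h : ∀ k, P k ↔ k = x ∨ k = y) :
    Module.finrank ℝ (quadVanish P) = 1 := by
  have hk : quadVanish P =
      Submodule.span ℝ {((1 : ℝ), (1 - x - y : ℝ), (x * y : ℝ))} := by
    ext v
    rw [Submodule.mem_span_singleton, mem_quadVanish]
    constructor
    · intro hv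
      have h1 := hv x ((h x).2 (Or.inl rfl))
      have h2 := hv y ((h y).2 (Or.inr rfl))
      have hne : (x : ℝ) - y ≠ 0 := by
        rw [sub_ne_zero]; exact_mod_cast hxy
      have h3 : v.1 * (x + y - 1 : ℝ) + v.2.1 = 0 := by
        apply mul_left_cancel₀ hne
        linear_combination h1 - h2
      refine ⟨v.1, ?_⟩
      ext
      · simp
      · simp only [Prod.smul_mk, smul_eq_mul]
        linear_combination -h3
      · simp only [Prod.smul_mk, smul_eq_mul]
        linear_combination x * h3 - h1
    · rintro ⟨r, rfl⟩ k hk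
      simp only [Prod.smul_mk, smul_eq_mul]
      rcases (h k).1 hk with rfl | rfl <;> ring
  rw [hk, finrank_span_singleton]
  intro h0
  have := congrArg Prod.fst h0
  simp at this

theorem quadVanish_three (P : ℕ → Prop) (x y z : ℕ) (hxy : x < y) (hyz : y < z)
    (hx : P x) (hy : P y) (hz : P z) : quadVanish P = ⊥ := by
  rw [eq_bot_iff]
  intro v hv
  have h1 := hv x hx
  have h2 := hv y hy
  have h3 := hv z hz
  have e1 : (x : ℝ) < y := by exact_mod_cast hxy
  have e2 : (y : ℝ) < z := by exact_mod_cast hyz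
  have h4 : v.1 * (x + y - 1 : ℝ) + v.2.1 = 0 := by
    apply mul_left_cancel₀ (sub_ne_zero.2 e1.ne)
    linear_combination h1 - h2
  have h5 : v.1 * (z + y - 1 : ℝ) + v.2.1 = 0 := by
    apply mul_left_cancel₀ (sub_ne_zero.2 e2.ne)
    linear_combination h2 - h3
  have h6 : v.1 = 0 := by
    apply mul_left_cancel₀ (sub_ne_zero.2 (e1.trans e2).ne)
    linear_combination h4 - h5
  have h7 : v.2.1 = 0 := by
    linear_combination h4 - (x + y - 1 : ℝ) * h6
  have h8 : v.2.2 = 0 := by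
    linear_combination h1 - (x * (x - 1) : ℝ) * h6 - x * h7
  rw [Submodule.mem_bot]
  exact Prod.ext h6 (Prod.ext h7 h8)

theorem mem_map_span (S : Finset ℕ) (p : LaurentPolynomial ℝ) :
    p ∈ (polyMonomialSpan S).map (Polynomial.toLaurentAlg : Polynomial ℝ →ₐ[ℝ] _).toLinearMap ↔
      ∀ m : ℤ, (∀ k ∈ S, (k : ℤ) ≠ m) → p.coeff m = 0 := by
  constructor
  · rintro ⟨f, hf, rfl⟩
    induction hf using Submodule.span_induction with
    | mem x hx =>
      obtain ⟨k, hk, rfl⟩ := hx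
      intro m hm
      have := hm k hk
      simp only [AlgHom.toLinearMap_apply, Polynomial.toLaurentAlg_apply,
        Polynomial.toLaurent_X_pow, LaurentPolynomial.T_apply]
      simp [this]
    | zero => intro m _; simp
    | add x y _ _ hx hy =>
      intro m hm
      rw [map_add, AddMonoidAlgebra.coeff_add, Finsupp.add_apply, hx m hm, hy m hm, add_zero]
    | smul r x _ hx =>
      intro m hm
      rw [map_smul, AddMonoidAlgebra.coeff_smul, Finsupp.smul_apply, hx m hm, smul_zero]
  · intro h
    rw [← AddMonoidAlgebra.sum_coeff_single p, Finsupp.sum]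
    refine Submodule.sum_mem _ fun m hm => ?_
    have : ∃ k ∈ S, (k : ℤ) = m := by
      by_contra! hc
      exact (Finsupp.mem_support_iff.1 hm) (h m hc)
    obtain ⟨k, hk, rfl⟩ := this
    refine ⟨p.coeff k • X ^ k, Submodule.smul_mem _ _ (Submodule.subset_span ⟨k, hk, rfl⟩), ?_⟩
    rw [map_smul, AlgHom.toLinearMap_apply, Polynomial.toLaurentAlg_apply,
        Polynomial.toLaurent_X_pow, LaurentPolynomial.smul_eq_C_mul,
        LaurentPolynomial.single_eq_C_mul_T]

theorem coeff_mul_C_mul_T (p : LaurentPolynomial ℝ) (r : ℝ) (j m : ℤ) :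
    (p * (LaurentPolynomial.C r * LaurentPolynomial.T j)).coeff (m + j) = p.coeff m * r := by
  rw [← LaurentPolynomial.single_eq_C_mul_T]
  have := AddMonoidAlgebra.coeff_mul_single_apply p r j (m + j)
  simpa using this

theorem tripleApply_coeff
    (t : LaurentPolynomial ℝ × LaurentPolynomial ℝ × LaurentPolynomial ℝ) (k : ℕ) (d : ℤ) :
    (tripleApply t (X ^ k)).coeff (d + k) = t.1.coeff (d + 2) * ((k : ℝ) * (k - 1))
      + t.2.1.coeff (d + 1) * k + t.2.2.coeff d := by
  have e1 : Polynomial.toLaurent (Polynomial.derivative (X ^ k : ℝ[X])) =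
      LaurentPolynomial.C (k : ℝ) * LaurentPolynomial.T ((k : ℤ) - 1) := by
    rcases k with _ | k
    · simp
    · rw [Polynomial.derivative_X_pow, Polynomial.toLaurent_C_mul_X_pow]
      simp
  have e2 : Polynomial.toLaurent (Polynomial.derivative (Polynomial.derivative (X ^ k : ℝ[X]))) =
      LaurentPolynomial.C ((k : ℝ) * (k - 1)) * LaurentPolynomial.T ((k : ℤ) - 2) := by
    rcases k with _ | _ | k
    · simp
    · simp
    · rw [Polynomial.derivative_X_pow, Polynomial.derivative_C_mul, Polynomial.derivative_X_pow,
        ← mul_assoc, ← map_mul, Polynomial.toLaurent_C_mul_X_pow]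
      congr 2
      · push_cast; simp
      · push_cast; ring
  have e3 : Polynomial.toLaurent (X ^ k : ℝ[X]) =
      LaurentPolynomial.C (1 : ℝ) * LaurentPolynomial.T (k : ℤ) := by simp
  rw [tripleApply, e1, e2, e3, AddMonoidAlgebra.coeff_add, AddMonoidAlgebra.coeff_add,
    Finsupp.add_apply, Finsupp.add_apply]
  have f1 := coeff_mul_C_mul_T t.1 ((k : ℝ) * (k - 1)) ((k : ℤ) - 2) (d + 2)
  have f2 := coeff_mul_C_mul_T t.2.1 (k : ℝ) ((k : ℤ) - 1) (d + 1)
  have f3 := coeff_mul_C_mul_T t.2.2 1 (k : ℤ) d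
  rw [show d + 2 + ((k : ℤ) - 2) = d + k by ring] at f1
  rw [show d + 1 + ((k : ℤ) - 1) = d + k by ring] at f2
  rw [f1, f2, f3, mul_one]

/-- Bad monomials in degree `d`. -/
def badAt (S : Finset ℕ) (d : ℤ) (k : ℕ) : Prop := k ∈ S ∧ ∀ j ∈ S, (j : ℤ) ≠ d + k

theorem mem_preserving (S : Finset ℕ)
    (t : LaurentPolynomial ℝ × LaurentPolynomial ℝ × LaurentPolynomial ℝ) :
    t ∈ preservingTriples (polyMonomialSpan S) ↔
      ∀ d : ℤ, (t.1.coeff (d + 2), t.2.1.coeff (d + 1), t.2.2.coeff d) ∈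
        quadVanish (badAt S d) := by
  constructor
  · intro h d k hk
    have h1 := h (X ^ k) (Submodule.subset_span ⟨k, hk.1, rfl⟩)
    rw [mem_map_span] at h1
    have h2 := h1 (d + k) hk.2
    rw [tripleApply_coeff] at h2
    exact h2
  · intro h f hf
    induction hf using Submodule.span_induction with
    | mem x hx =>
      obtain ⟨k, hk, rfl⟩ := hx
      rw [mem_map_span]
      intro m hm
      obtain ⟨d, rfl⟩ : ∃ d : ℤ, m = d + k := ⟨m - k, by ring⟩
      rw [tripleApply_coeff]
      exact h d k ⟨hk, hm⟩
    | zero => simp [tripleApply]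
    | add x y _ _ hx hy =>
      have : tripleApply t (x + y) = tripleApply t x + tripleApply t y := by
        simp only [tripleApply, map_add]; ring
      rw [this]
      exact Submodule.add_mem _ hx hy
    | smul r x _ hx =>
      have : tripleApply t (r • x) = r • tripleApply t x := by
        simp only [tripleApply, Polynomial.smul_eq_C_mul, Polynomial.derivative_C_mul,
          Polynomial.toLaurent_C_mul_eq, LaurentPolynomial.smul_eq_C_mul]
        ring
      rw [this]
      exact Submodule.smul_mem _ _ hx

theorem coeff_sum_single_shift (D : Finset ℤ) (g : D → ℝ) (s d : ℤ) :
    (∑ e : D, (AddMonoidAlgebra.single ((e : ℤ) + s) (g e) : LaurentPolynomial ℝ)).coeff (d + s)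
      = if h : d ∈ D then g ⟨d, h⟩ else 0 := by
  rw [AddMonoidAlgebra.coeff_sum, Finsupp.finset_sum_apply]
  simp only [AddMonoidAlgebra.coeff_single_apply, add_left_inj]
  split_ifs with h
  · rw [Finset.sum_eq_single ⟨d, h⟩]
    · simp
    · intro b _ hb
      rw [if_neg]
      intro hbd
      exact hb (Subtype.ext hbd)
    · simp
  · apply Finset.sum_eq_zero
    intro b _
    rw [if_neg]
    rintro rfl
    exact h b.2

theorem finrank_eq_sum (S : Finset ℕ) (D : Finset ℤ)
    (hD : ∀ d, d ∉ D → quadVanish (badAt S d) = ⊥) :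
    Module.finrank ℝ (preservingTriples (polyMonomialSpan S)) =
      ∑ d ∈ D, Module.finrank ℝ (quadVanish (badAt S d)) := by
  let F : preservingTriples (polyMonomialSpan S) →ₗ[ℝ]
      ((d : D) → quadVanish (badAt S (d : ℤ))) :=
    { toFun := fun t d => ⟨_, (mem_preserving S t.1).1 t.2 d⟩
      map_add' := by intro s t; rfl
      map_smul' := by intro r t; rfl }
  have hF : Function.Bijective F := by
    constructor
    · rw [injective_iff_map_eq_zero]
      intro t ht
      have key : ∀ d : ℤ,
          (t.1.1.coeff (d + 2), t.1.2.1.coeff (d + 1), t.1.2.2.coeff d) = (0 : ℝ × ℝ × ℝ) := by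
        intro d
        by_cases h : d ∈ D
        · exact congrArg Subtype.val (congrFun ht ⟨d, h⟩)
        · have := (mem_preserving S t.1).1 t.2 d
          rw [hD d h] at this
          exact this
      apply Subtype.ext
      refine Prod.ext ?_ (Prod.ext ?_ ?_)
      · ext m
        have := congrArg Prod.fst (key (m - 2))
        simpa using this
      · ext m
        have := congrArg (fun v => v.2.1) (key (m - 1))
        simpa using this
      · ext m
        exact congrArg (fun v => v.2.2) (key m)
    · intro v
      let t : LaurentPolynomial ℝ × LaurentPolynomial ℝ × LaurentPolynomial ℝ :=
        (∑ e : D, AddMonoidAlgebra.single ((e : ℤ) + 2) (v e).1.1,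
          ∑ e : D, AddMonoidAlgebra.single ((e : ℤ) + 1) (v e).1.2.1,
          ∑ e : D, AddMonoidAlgebra.single ((e : ℤ) + 0) (v e).1.2.2)
      have c1 := coeff_sum_single_shift D (fun e => (v e).1.1) 2
      have c2 := coeff_sum_single_shift D (fun e => (v e).1.2.1) 1
      have c3 := coeff_sum_single_shift D (fun e => (v e).1.2.2) 0
      have ht : ∀ d : ℤ, (t.1.coeff (d + 2), t.2.1.coeff (d + 1), t.2.2.coeff d) =
          if h : d ∈ D then (v ⟨d, h⟩).1 else 0 := by
        intro d
        have c3' := c3 d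
        rw [add_zero] at c3'
        refine Prod.ext ((c1 d).trans ?_) (Prod.ext ((c2 d).trans ?_) (c3'.trans ?_)) <;>
        split_ifs <;> rfl
      refine ⟨⟨t, (mem_preserving S t).2 fun d => ?_⟩, ?_⟩
      · rw [ht d]
        split_ifs with h
        · exact (v ⟨d, h⟩).2
        · exact Submodule.zero_mem _
      · funext d
        apply Subtype.ext
        refine (ht d).trans ?_
        rw [dif_pos d.2]
  rw [(LinearEquiv.ofBijective F hF).finrank_eq, Module.finrank_pi_fintype]
  exact Finset.sum_coe_sort D (fun d => Module.finrank ℝ (quadVanish (badAt S d)))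

theorem sum_Icc_two (f : ℤ → ℕ) :
    ∑ d ∈ Finset.Icc (-2 : ℤ) 2, f d = f (-2) + f (-1) + f 0 + f 1 + f 2 := by
  have : Finset.Icc (-2 : ℤ) 2 = {-2, -1, 0, 1, 2} := by decide
  rw [this]
  simp [add_assoc]

theorem badAt_range (n : ℕ) (d : ℤ) (k : ℕ) :
    badAt (Finset.range (n + 1)) d k ↔ k ≤ n ∧ (d + k < 0 ∨ n < d + k) := by
  simp only [badAt, Finset.mem_range]
  constructor
  · rintro ⟨h1, h2⟩
    refine ⟨by omega, ?_⟩
    by_contra! hc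
    exact h2 (d + k).toNat (by omega) (by omega)
  · rintro ⟨h1, h2⟩
    exact ⟨by omega, fun j hj => by omega⟩

theorem badAt_erase (n i : ℕ) (d : ℤ) (k : ℕ) :
    badAt ((Finset.range (n + 1)).erase i) d k ↔
      k ≤ n ∧ k ≠ i ∧ (d + k < 0 ∨ n < d + k ∨ d + k = i) := by
  simp only [badAt, Finset.mem_range, Finset.mem_erase]
  constructor
  · rintro ⟨h1, h2⟩
    refine ⟨by omega, by omega, ?_⟩
    by_contra! hc
    exact h2 (d + k).toNat (by omega) (by omega)
  · rintro ⟨h1, h2, h3⟩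
    exact ⟨by omega, fun j hj => by omega⟩

/-- For `n ≥ 2` the space of triples `(a,b,c)` of real Laurent
polynomials with `a·f'' + b·f' + c·f ∈ 𝒫_n` for every polynomial `f` of degree `≤ n`
has dimension `9`; and for `n ≥ 4` the analogous spaces of triples preserving
`𝒫̂_n = span{1, z², z³, …, z^n}` and `𝒫̃_n = span{1, z, …, z^{n−2}, z^n}` each have
dimension `7`. -/
theorem finrank_preservingTriples (n : ℕ) (hn : 2 ≤ n) :
    Module.finrank ℝ (preservingTriples (polyMonomialSpan (Finset.range (n + 1)))) = 9 ∧
    (4 ≤ n →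
      Module.finrank ℝ
        (preservingTriples (polyMonomialSpan ((Finset.range (n + 1)).erase 1))) = 7 ∧
      Module.finrank ℝ
        (preservingTriples (polyMonomialSpan ((Finset.range (n + 1)).erase (n - 1)))) = 7) := by
  refine ⟨?_, fun h4 => ⟨?_, ?_⟩⟩
  · rw [finrank_eq_sum _ (Finset.Icc (-2) 2), sum_Icc_two,
      quadVanish_two _ 0 1 (by omega), quadVanish_one _ 0, quadVanish_none,
      quadVanish_one _ n, quadVanish_two _ (n - 1) n (by omega)]
    · intro k; rw [badAt_range]; omega
    · intro k; rw [badAt_range]; omega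
    · intro k; rw [badAt_range]; omega
    · intro k; rw [badAt_range]; omega
    · intro k; rw [badAt_range]; omega
    · intro d hd
      rw [Finset.mem_Icc] at hd
      by_cases h : 0 < d
      · apply quadVanish_three _ (n - 2) (n - 1) n <;> (try rw [badAt_range]) <;> omega
      · apply quadVanish_three _ 0 1 2 <;> (try rw [badAt_range]) <;> omega
  · rw [finrank_eq_sum _ (Finset.Icc (-2) 2), sum_Icc_two,
      quadVanish_two _ 0 3 (by omega), quadVanish_two _ 0 2 (by omega), quadVanish_none,
      quadVanish_two _ 0 n (by omega), quadVanish_two _ (n - 1) n (by omega)]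
    · intro k; rw [badAt_erase]; omega
    · intro k; rw [badAt_erase]; omega
    · intro k; rw [badAt_erase]; omega
    · intro k; rw [badAt_erase]; omega
    · intro k; rw [badAt_erase]; omega
    · intro d hd
      rw [Finset.mem_Icc] at hd
      by_cases h : 0 < d
      · apply quadVanish_three _ (n - 2) (n - 1) n <;> (try rw [badAt_erase]) <;> omega
      · by_cases h3 : d = -3
        · apply quadVanish_three _ 0 2 4 <;> (try rw [badAt_erase]) <;> omega
        · apply quadVanish_three _ 0 2 3 <;> (try rw [badAt_erase]) <;> omega
  · rw [finrank_eq_sum _ (Finset.Icc (-2) 2), sum_Icc_two,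
      quadVanish_two _ 0 1 (by omega), quadVanish_two _ 0 n (by omega), quadVanish_none,
      quadVanish_two _ (n - 2) n (by omega), quadVanish_two _ (n - 3) n (by omega)]
    · intro k; rw [badAt_erase]; omega
    · intro k; rw [badAt_erase]; omega
    · intro k; rw [badAt_erase]; omega
    · intro k; rw [badAt_erase]; omega
    · intro k; rw [badAt_erase]; omega
    · intro d hd
      rw [Finset.mem_Icc] at hd
      by_cases h : 0 < d
      · by_cases h3 : d = 3
        · apply quadVanish_three _ (n - 4) (n - 2) n <;> (try rw [badAt_erase]) <;> omega
        · apply quadVanish_three _ (n - 3) (n - 2) n <;> (try rw [badAt_erase]) <;> omega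
      · apply quadVanish_three _ 0 1 2 <;> (try rw [badAt_erase]) <;> omega
end

section
/- Let n ≥ 4. A triple (a,b,c) of real Laurent polynomials satisfies a·f'' + b·f' + c·f ∈ 𝒫̂_n for every f ∈ 𝒫̂_n = span{1, z², z³, …, z^n} if and only if the associated operator T f = a f'' + b f' + c f is a real linear combination of the following seven operators: T₂^{(+2)} f = z⁴f'' + 2(1−n)z³f' + n(n−1)z²f; T₂^{(+1)} f = z³f'' + (1−n)z²f'; T₂^{(0)} f = z²f''; T₂^{(−1)} f = z f'' − f'; T₂^{(−2)} f = f'' − 2z⁻¹f'; T₁^{(0)} f = z f'; T₀^{(0)} f = f. -/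
open Polynomial LaurentPolynomial

def HatGood (n : ℕ) (m : ℤ) : Prop := m = 0 ∨ (2 ≤ m ∧ m ≤ n)

theorem hat_mem_of_coeff (n : ℕ) (g : LaurentPolynomial ℝ)
    (h : ∀ m : ℤ, ¬ HatGood n m → g.coeff m = 0) :
    g ∈ (polyMonomialSpan ((Finset.range (n + 1)).erase 1)).map
            (Polynomial.toLaurentAlg : Polynomial ℝ →ₐ[ℝ] _).toLinearMap := by
  have hg : g = ∑ k ∈ (Finset.range (n + 1)).erase 1,
      g.coeff (k : ℤ) • (LaurentPolynomial.T (k : ℤ) : LaurentPolynomial ℝ) := by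
    ext m
    rw [AddMonoidAlgebra.coeff_sum, Finset.sum_apply']
    simp only [AddMonoidAlgebra.coeff_smul_apply, LaurentPolynomial.T_apply, smul_eq_mul,
      mul_ite, mul_one, mul_zero]
    by_cases hm : HatGood n m
    · have hm' := hm
      unfold HatGood at hm'
      lift m to ℕ using (by omega)
      rw [Finset.sum_eq_single m]
      · simp
      · intro b _ hb
        simp [hb]
      · intro hh
        exfalso; apply hh
        simp only [Finset.mem_erase, Finset.mem_range]
        omega
    · rw [h m hm]
      symm
      apply Finset.sum_eq_zero
      intro k hk
      split_ifs with hkm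
      · rw [hkm, h m hm]
      · rfl
  rw [hg]
  refine Submodule.sum_mem _ fun k hk => Submodule.smul_mem _ _ ?_
  refine ⟨X ^ k, Submodule.subset_span ⟨k, hk, rfl⟩, ?_⟩
  simp [Polynomial.toLaurentAlg_apply]

theorem hat_coeff_of_mem (n : ℕ) (g : LaurentPolynomial ℝ)
    (hg : g ∈ (polyMonomialSpan ((Finset.range (n + 1)).erase 1)).map
            (Polynomial.toLaurentAlg : Polynomial ℝ →ₐ[ℝ] _).toLinearMap)
    (m : ℤ) (hm : ¬ HatGood n m) : g.coeff m = 0 := by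
  obtain ⟨f, hf, rfl⟩ := hg
  change f ∈ Submodule.span ℝ _ at hf
  induction hf using Submodule.span_induction with
  | mem x hx =>
    obtain ⟨k, hk, rfl⟩ := hx
    have : (k : ℤ) ≠ m := by
      rintro rfl
      apply hm
      simp only [Finset.mem_erase, Finset.mem_range] at hk
      unfold HatGood
      omega
    simp [Polynomial.toLaurentAlg_apply, this]
  | zero => simp
  | add x y _ _ hx hy => 
    rw [map_add, AddMonoidAlgebra.coeff_add, Finsupp.add_apply, hx, hy, add_zero]
  | smul r x _ hx =>
    rw [map_smul, AddMonoidAlgebra.coeff_smul_apply, hx, smul_zero]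

theorem hat_coeff_CT (g : LaurentPolynomial ℝ) (r : ℝ) (j m : ℤ) :
    (g * (LaurentPolynomial.C r * LaurentPolynomial.T j)).coeff m = g.coeff (m - j) * r := by
  rw [← LaurentPolynomial.single_eq_C_mul_T, AddMonoidAlgebra.coeff_mul_single_apply,
    sub_eq_add_neg]

theorem hat_apply_coeff (a b c : LaurentPolynomial ℝ) (k : ℕ) (d : ℤ) :
    (tripleApply (a, b, c) (X ^ k)).coeff (k + d) =
      a.coeff (d + 2) * ((k : ℝ) * (k - 1)) + b.coeff (d + 1) * k + c.coeff d := by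
  have h1 : Polynomial.toLaurent (X ^ k : ℝ[X]) =
      LaurentPolynomial.C 1 * LaurentPolynomial.T (k : ℤ) := by simp
  have h2 : Polynomial.toLaurent (derivative (X ^ k : ℝ[X])) =
      LaurentPolynomial.C (k : ℝ) * LaurentPolynomial.T ((k : ℤ) - 1) := by
    rcases k with _ | k
    · simp
    · rw [derivative_X_pow, Polynomial.toLaurent_C_mul_X_pow]; simp
  have h3 : Polynomial.toLaurent (derivative (derivative (X ^ k : ℝ[X]))) =
      LaurentPolynomial.C ((k : ℝ) * (k - 1)) * LaurentPolynomial.T ((k : ℤ) - 2) := by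
    rcases k with _ | _ | k
    · simp
    · simp
    · rw [derivative_X_pow, derivative_C_mul, derivative_X_pow, ← mul_assoc, ← Polynomial.C_mul,
        Polynomial.toLaurent_C_mul_X_pow]
      congr 2
      · push_cast [Nat.add_sub_cancel]; ring_nf
      · push_cast; omega
  unfold tripleApply
  simp only [h1, h2, h3, AddMonoidAlgebra.coeff_add, Finsupp.add_apply, hat_coeff_CT]
  rw [show (k : ℤ) + d - (k - 2) = d + 2 by ring, show (k : ℤ) + d - (k - 1) = d + 1 by ring,
    show (k : ℤ) + d - k = d by ring, mul_one]

theorem hat_preserves_iff (n : ℕ) (a b c : LaurentPolynomial ℝ) :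
    (∀ f ∈ polyMonomialSpan ((Finset.range (n + 1)).erase 1),
        tripleApply (a, b, c) f ∈
          (polyMonomialSpan ((Finset.range (n + 1)).erase 1)).map
            (Polynomial.toLaurentAlg : Polynomial ℝ →ₐ[ℝ] _).toLinearMap) ↔
    ∀ (k : ℕ) (d : ℤ), HatGood n k → ¬ HatGood n (k + d) →
      a.coeff (d + 2) * ((k : ℝ) * (k - 1)) + b.coeff (d + 1) * k + c.coeff d = 0 := by
  constructor
  · intro H k d hk hd
    rw [← hat_apply_coeff]
    refine hat_coeff_of_mem n _ (H _ (Submodule.subset_span ⟨k, ?_, rfl⟩)) _ hd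
    unfold HatGood at hk
    simp only [Finset.mem_erase, Finset.mem_range]
    omega
  · intro H f hf
    change f ∈ Submodule.span ℝ _ at hf
    induction hf using Submodule.span_induction with
    | mem x hx =>
      obtain ⟨k, hk, rfl⟩ := hx
      apply hat_mem_of_coeff
      intro m hm
      have h := hat_apply_coeff a b c k (m - k)
      rw [add_sub_cancel] at h
      rw [h]
      apply H
      · simp only [Finset.mem_erase, Finset.mem_range] at hk
        unfold HatGood
        omega
      · rwa [add_sub_cancel]
    | zero => simp [tripleApply]
    | add x y _ _ hx hy =>
      convert! Submodule.add_mem _ hx hy using 1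
      simp only [tripleApply, map_add]; ring
    | smul r x _ hx =>
      convert! Submodule.smul_mem _ r hx using 1
      simp only [tripleApply, Polynomial.derivative_smul, ← Polynomial.toLaurentAlg_apply,
        map_smul, mul_smul_comm, smul_add]

def HatForm (n : ℕ) (d : ℤ) (A B C : ℝ) : Prop :=
  (d = 2 ∧ B = 2 * (1 - (n : ℝ)) * A ∧ C = (n : ℝ) * (n - 1) * A) ∨
  (d = 1 ∧ B = (1 - (n : ℝ)) * A ∧ C = 0) ∨ d = 0 ∨
  (d = -1 ∧ B = -A ∧ C = 0) ∨ (d = -2 ∧ B = -2 * A ∧ C = 0) ∨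
  (d ≠ 2 ∧ d ≠ 1 ∧ d ≠ 0 ∧ d ≠ -1 ∧ d ≠ -2 ∧ A = 0 ∧ B = 0 ∧ C = 0)

theorem hat_form_iff (n : ℕ) (hn : 4 ≤ n) (d : ℤ) (A B C : ℝ) :
    (∀ k : ℕ, HatGood n k → ¬ HatGood n (k + d) →
      A * ((k : ℝ) * (k - 1)) + B * k + C = 0) ↔ HatForm n d A B C := by
  unfold HatForm HatGood
  constructor
  · intro H
    obtain ⟨p, rfl⟩ : ∃ p, n = p + 4 := ⟨n - 4, by omega⟩
    by_cases h2 : d = 2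
    · have e1 := H (p + 4) (by omega) (by omega)
      have e2 := H (p + 3) (by omega) (by omega)
      push_cast at *
      refine Or.inl ⟨h2, ?_, ?_⟩
      · linear_combination e1 - e2
      · linear_combination (-3 - (p : ℝ)) * e1 + (p + 4 : ℝ) * e2
    by_cases h1 : d = 1
    · have e1 := H (p + 4) (by omega) (by omega)
      have e2 := H 0 (by omega) (by omega)
      push_cast at *
      have hC : C = 0 := by linarith
      refine Or.inr (Or.inl ⟨h1, ?_, hC⟩)
      have hp : (p : ℝ) + 4 ≠ 0 := by positivity
      apply mul_left_cancel₀ hp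
      linear_combination e1 - hC
    by_cases h0 : d = 0
    · exact Or.inr (Or.inr (Or.inl h0))
    by_cases h1' : d = -1
    · have e1 := H 2 (by omega) (by omega)
      have e2 := H 0 (by omega) (by omega)
      push_cast at *
      refine Or.inr (Or.inr (Or.inr (Or.inl ⟨h1', ?_, ?_⟩))) <;> linarith
    by_cases h2' : d = -2
    · have e1 := H 3 (by omega) (by omega)
      have e2 := H 0 (by omega) (by omega)
      push_cast at *
      refine Or.inr (Or.inr (Or.inr (Or.inr (Or.inl ⟨h2', ?_, ?_⟩)))) <;> linarith
    refine Or.inr (Or.inr (Or.inr (Or.inr (Or.inr ⟨h2, h1, h0, h1', h2', ?_⟩))))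
    by_cases hd : 3 ≤ d
    · have e1 := H (p + 4) (by omega) (by omega)
      have e2 := H (p + 3) (by omega) (by omega)
      have e3 := H (p + 2) (by omega) (by omega)
      push_cast at *
      have hA : A = 0 := by linear_combination (e1 - 2 * e2 + e3) / 2
      subst hA
      have hB : B = 0 := by linear_combination e1 - e2
      subst hB
      exact ⟨rfl, rfl, by linarith⟩
    by_cases hd' : d = -3
    · have e1 := H 4 (by omega) (by omega)
      have e2 := H 2 (by omega) (by omega)
      have e3 := H 0 (by omega) (by omega)
      push_cast at *
      refine ⟨?_, ?_, ?_⟩ <;> linarith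
    · have e1 := H 3 (by omega) (by omega)
      have e2 := H 2 (by omega) (by omega)
      have e3 := H 0 (by omega) (by omega)
      push_cast at *
      refine ⟨?_, ?_, ?_⟩ <;> linarith
  · rintro H k hk hkd
    rcases H with ⟨rfl, rfl, rfl⟩ | ⟨rfl, rfl, rfl⟩ | rfl | ⟨rfl, rfl, rfl⟩ | ⟨rfl, rfl, rfl⟩ |
      ⟨-, -, -, -, -, rfl, rfl, rfl⟩
    · have : k = n ∨ n = k + 1 := by omega
      rcases this with rfl | rfl <;> push_cast <;> ring
    · have : k = n ∨ k = 0 := by omega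
      rcases this with rfl | rfl <;> push_cast <;> ring
    · simp at hkd; omega
    · have : k = 2 ∨ k = 0 := by omega
      rcases this with rfl | rfl <;> push_cast <;> ring
    · have : k = 3 ∨ k = 0 := by omega
      rcases this with rfl | rfl <;> push_cast <;> ring
    · ring

theorem hat_coeff_CT' (r : ℝ) (j m : ℤ) :
    (LaurentPolynomial.C r * LaurentPolynomial.T j).coeff m = if j = m then r else 0 := by
  rw [← LaurentPolynomial.single_eq_C_mul_T, AddMonoidAlgebra.coeff_single, Finsupp.single_apply]

theorem hat_coeff_one (m : ℤ) :
    (1 : LaurentPolynomial ℝ).coeff m = if 0 = m then 1 else 0 := by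
  rw [← LaurentPolynomial.T_zero, LaurentPolynomial.T_apply]

/-- For `n ≥ 4`, a triple `(a,b,c)` of real Laurent polynomials
satisfies `a·f'' + b·f' + c·f ∈ 𝒫̂_n` for every `f ∈ 𝒫̂_n = span{1, z², z³, …, z^n}`
if and only if the operator `T f = a f'' + b f' + c f` is a real linear combination of
the seven operators
`T₂⁽⁺²⁾f = z⁴f'' + 2(1−n)z³f' + n(n−1)z²f`, `T₂⁽⁺¹⁾f = z³f'' + (1−n)z²f'`,
`T₂⁽⁰⁾f = z²f''`, `T₂⁽⁻¹⁾f = z f'' − f'`, `T₂⁽⁻²⁾f = f'' − 2z⁻¹f'`,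
`T₁⁽⁰⁾f = z f'`, `T₀⁽⁰⁾f = f`. -/
theorem preserves_hat_iff_combination (n : ℕ) (hn : 4 ≤ n)
    (a b c : LaurentPolynomial ℝ) :
    (∀ f ∈ polyMonomialSpan ((Finset.range (n + 1)).erase 1),
        tripleApply (a, b, c) f ∈
          (polyMonomialSpan ((Finset.range (n + 1)).erase 1)).map
            (Polynomial.toLaurentAlg : Polynomial ℝ →ₐ[ℝ] _).toLinearMap) ↔
    ∃ c₁ c₂ c₃ c₄ c₅ c₆ c₇ : ℝ,
      ((a, b, c) : LaurentPolynomial ℝ × LaurentPolynomial ℝ × LaurentPolynomial ℝ) =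
        c₁ • (LaurentPolynomial.T 4,
              LaurentPolynomial.C (2 * (1 - (n : ℝ))) * LaurentPolynomial.T 3,
              LaurentPolynomial.C ((n : ℝ) * ((n : ℝ) - 1)) * LaurentPolynomial.T 2) +
        c₂ • (LaurentPolynomial.T 3,
              LaurentPolynomial.C (1 - (n : ℝ)) * LaurentPolynomial.T 2, 0) +
        c₃ • (LaurentPolynomial.T 2, 0, 0) +
        c₄ • (LaurentPolynomial.T 1, -1, 0) +
        c₅ • (1, LaurentPolynomial.C (-2) * LaurentPolynomial.T (-1), 0) +
        c₆ • (0, LaurentPolynomial.T 1, 0) +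
        c₇ • (0, 0, 1) := by
  rw [hat_preserves_iff]
  have key : (∀ (k : ℕ) (d : ℤ), HatGood n k → ¬ HatGood n (k + d) →
      a.coeff (d + 2) * ((k : ℝ) * (k - 1)) + b.coeff (d + 1) * k + c.coeff d = 0) ↔
      ∀ d : ℤ, HatForm n d (a.coeff (d + 2)) (b.coeff (d + 1)) (c.coeff d) := by
    rw [forall_comm]
    exact forall_congr' fun d => hat_form_iff n hn d _ _ _
  rw [key]
  constructor
  · intro H
    refine ⟨a.coeff 4, a.coeff 3, a.coeff 2, a.coeff 1, a.coeff 0, b.coeff 1, c.coeff 0, ?_⟩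
    simp only [Prod.smul_mk, Prod.mk_add_mk, Prod.mk.injEq, smul_zero, add_zero, zero_add]
    refine ⟨?_, ?_, ?_⟩
    · ext m
      simp only [AddMonoidAlgebra.coeff_add, Finsupp.add_apply, AddMonoidAlgebra.coeff_smul_apply,
        LaurentPolynomial.T_apply, hat_coeff_one, hat_coeff_CT', smul_eq_mul]
      have h := H (m - 2)
      rw [sub_add_cancel] at h
      rcases h with ⟨hd, -⟩ | ⟨hd, -⟩ | hd | ⟨hd, -⟩ | ⟨hd, -⟩ | ⟨h1, h2, h3, h4, h5, h, -⟩
      · obtain rfl : m = 4 := by omega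
        simp
      · obtain rfl : m = 3 := by omega
        simp
      · obtain rfl : m = 2 := by omega
        simp
      · obtain rfl : m = 1 := by omega
        simp
      · obtain rfl : m = 0 := by omega
        simp
      · rw [h, if_neg (by omega), if_neg (by omega), if_neg (by omega), if_neg (by omega),
          if_neg (by omega)]
        simp
    · ext m
      simp only [AddMonoidAlgebra.coeff_add, Finsupp.add_apply, AddMonoidAlgebra.coeff_smul_apply,
        AddMonoidAlgebra.coeff_neg, Finsupp.neg_apply,
        LaurentPolynomial.T_apply, hat_coeff_one, hat_coeff_CT', smul_eq_mul]
      have h := H (m - 1)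
      rw [sub_add_cancel] at h
      rcases h with ⟨hd, h, -⟩ | ⟨hd, h, -⟩ | hd | ⟨hd, h, -⟩ | ⟨hd, h, -⟩ |
        ⟨h1, h2, h3, h4, h5, -, h, -⟩
      · obtain rfl : m = 3 := by omega
        norm_num at h ⊢; linarith
      · obtain rfl : m = 2 := by omega
        norm_num at h ⊢; linarith
      · obtain rfl : m = 1 := by omega
        norm_num
      · obtain rfl : m = 0 := by omega
        norm_num at h ⊢; linarith
      · obtain rfl : m = -1 := by omega
        norm_num at h ⊢; linarith
      · rw [h, if_neg (by omega), if_neg (by omega), if_neg (by omega), if_neg (by omega),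
          if_neg (by omega)]
        simp
    · ext m
      simp only [AddMonoidAlgebra.coeff_add, Finsupp.add_apply, AddMonoidAlgebra.coeff_smul_apply,
        LaurentPolynomial.T_apply, hat_coeff_one, hat_coeff_CT', smul_eq_mul]
      rcases H m with ⟨hd, -, h⟩ | ⟨hd, -, h⟩ | hd | ⟨hd, -, h⟩ | ⟨hd, -, h⟩ |
        ⟨h1, h2, h3, h4, h5, -, -, h⟩
      · subst hd
        norm_num at h ⊢; linarith
      · subst hd
        simp [h]
      · subst hd
        simp
      · subst hd
        simp [h]
      · subst hd
        simp [h]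
      · rw [h, if_neg (by omega), if_neg (by omega)]
        simp
  · rintro ⟨c₁, c₂, c₃, c₄, c₅, c₆, c₇, h⟩ d
    simp only [Prod.smul_mk, Prod.mk_add_mk, Prod.mk.injEq, smul_zero, add_zero, zero_add] at h
    obtain ⟨rfl, rfl, rfl⟩ := h
    simp only [AddMonoidAlgebra.coeff_add, Finsupp.add_apply, AddMonoidAlgebra.coeff_smul_apply,
        AddMonoidAlgebra.coeff_neg, Finsupp.neg_apply,
        LaurentPolynomial.T_apply, hat_coeff_one, hat_coeff_CT', smul_eq_mul]
    unfold HatForm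
    by_cases h2 : d = 2
    · subst h2; left; norm_num; constructor <;> ring
    by_cases h1 : d = 1
    · subst h1; right; left; norm_num; ring
    by_cases h0 : d = 0
    · exact Or.inr (Or.inr (Or.inl h0))
    by_cases h1' : d = -1
    · subst h1'; right; right; right; left; norm_num
    by_cases h2' : d = -2
    · subst h2'; right; right; right; right; left; norm_num; try ring
    refine Or.inr (Or.inr (Or.inr (Or.inr (Or.inr ⟨h2, h1, h0, h1', h2', ?_, ?_, ?_⟩))))
    · rw [if_neg (by omega), if_neg (by omega), if_neg (by omega), if_neg (by omega),
          if_neg (by omega)]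
      simp
    · rw [if_neg (by omega), if_neg (by omega), if_neg (by omega), if_neg (by omega),
          if_neg (by omega)]
      simp
    · rw [if_neg (by omega), if_neg (by omega)]
      simp
end

section
/- Let n ≥ 2 and let α, β, γ, δ be real numbers with αδ − βγ = 1, α ≠ 0, and γ ≠ 0. Let ℳ_n ⊆ ℝ[w] be the span of the n polynomials (γw + δ)^{n−k}(αw + β)^k for k ∈ {0} ∪ {2, 3, …, n}. Then a real polynomial P of degree ≤ n belongs to ℳ_n if and only if P'(−β/α) − nαγ·P(−β/α) = 0. -/
open Polynomial

/-- The Möbius-transformed exceptional module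
`ℳ_n = span{(γw + δ)^{n−k}(αw + β)^k : k = 0, 2, 3, …, n} ⊆ ℝ[w]`. -/
noncomputable def mobiusModule (n : ℕ) (α β γ δ : ℝ) : Submodule ℝ (Polynomial ℝ) :=
  Submodule.span ℝ
    {q | ∃ k ∈ ({0} : Finset ℕ) ∪ Finset.Icc 2 n,
      q = (Polynomial.C γ * Polynomial.X + Polynomial.C δ) ^ (n - k) *
          (Polynomial.C α * Polynomial.X + Polynomial.C β) ^ k}

theorem step_aux (n : ℕ) (α β γ δ : ℝ) (hdet : α * δ - β * γ = 1) (hα : α ≠ 0)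
    (P : Polynomial ℝ) (hP : P.natDegree ≤ n) :
    ∃ (c : ℝ) (Q : Polynomial ℝ), Q.natDegree ≤ n - 1 ∧
      P = C c * (C γ * X + C δ) ^ n + (C α * X + C β) * Q := by
  have hL : γ * (-β / α) + δ = 1 / α := by
    field_simp
    linarith
  set F : Polynomial ℝ := P - C (P.eval (-β / α) * α ^ n) * (C γ * X + C δ) ^ n with hF
  have hroot : F.IsRoot (-β / α) := by
    simp [hF, hL, hα]
  have hdeg : F.natDegree ≤ n := by
    refine (natDegree_sub_le _ _).trans (max_le hP ?_)
    refine (natDegree_C_mul_le _ _).trans ?_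
    refine natDegree_pow_le.trans ?_
    have := natDegree_linear_le (a := γ) (b := δ)
    nlinarith
  have hmul := mul_divByMonic_eq_iff_isRoot.mpr hroot
  refine ⟨P.eval (-β / α) * α ^ n, C α⁻¹ * (F /ₘ (X - C (-β / α))), ?_, ?_⟩
  · refine (natDegree_C_mul_le _ _).trans ?_
    rw [natDegree_divByMonic _ (monic_X_sub_C _), natDegree_X_sub_C]
    omega
  · have hM : (C α * X + C β) * C α⁻¹ = (X - C (-β / α) : Polynomial ℝ) := by
      have h1 : (C α * C α⁻¹ : Polynomial ℝ) = 1 := by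
        rw [← C_mul, mul_inv_cancel₀ hα, C_1]
      have h2 : (C (-β / α) : Polynomial ℝ) = - (C β * C α⁻¹) := by
        rw [← C_mul, ← C_neg]
        congr 1
        ring
      rw [h2]
      linear_combination X * h1
    rw [← mul_assoc, hM, hmul, hF]
    ring

theorem gen_aux (α β γ δ : ℝ) (hdet : α * δ - β * γ = 1) (hα : α ≠ 0)
    (N : Submodule ℝ (Polynomial ℝ)) (m : ℕ) :
    ∀ (A R : Polynomial ℝ), R.natDegree ≤ m →
      (∀ k ≤ m, A * ((C γ * X + C δ) ^ (m - k) * (C α * X + C β) ^ k) ∈ N) → A * R ∈ N := by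
  induction m with
  | zero =>
    intro A R hR h
    rw [eq_C_of_natDegree_le_zero hR, mul_comm, ← smul_eq_C_mul]
    apply N.smul_mem
    simpa using h 0 le_rfl
  | succ m ih =>
    intro A R hR h
    obtain ⟨c, Q, hQ, rfl⟩ := step_aux (m + 1) α β γ δ hdet hα R hR
    rw [mul_add]
    apply N.add_mem
    · rw [mul_left_comm, ← smul_eq_C_mul]
      apply N.smul_mem
      simpa using h 0 (Nat.zero_le _)
    · rw [← mul_assoc]
      apply ih _ _ (by simpa using hQ)
      intro k hk
      have := h (k + 1) (by omega)
      rw [Nat.add_sub_add_right] at this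
      convert this using 1
      ring

/-- Let `n ≥ 2` and `α, β, γ, δ ∈ ℝ` with `αδ − βγ = 1`, `α ≠ 0`,
`γ ≠ 0`.  A real polynomial `P` of degree `≤ n` belongs to `ℳ_n` if and only if
`P'(−β/α) − nαγ·P(−β/α) = 0`. -/
theorem mem_mobiusModule_iff (n : ℕ) (hn : 2 ≤ n) (α β γ δ : ℝ)
    (hdet : α * δ - β * γ = 1) (hα : α ≠ 0) (hγ : γ ≠ 0)
    (P : Polynomial ℝ) (hP : P.natDegree ≤ n) :
    P ∈ mobiusModule n α β γ δ ↔
      (Polynomial.derivative P).eval (-β / α) - n * α * γ * P.eval (-β / α) = 0 := by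
  have hL : γ * (-β / α) + δ = 1 / α := by
    field_simp
    linarith
  have hM : α * (-β / α) + β = 0 := by
    field_simp
    ring
  have hmod : ∀ k ∈ ({0} : Finset ℕ) ∪ Finset.Icc 2 n,
      (C γ * X + C δ) ^ (n - k) * (C α * X + C β) ^ k ∈ mobiusModule n α β γ δ :=
    fun k hk => Submodule.subset_span ⟨k, hk, rfl⟩
  have hfor : ∀ P ∈ mobiusModule n α β γ δ,
      (derivative P).eval (-β / α) - n * α * γ * P.eval (-β / α) = 0 := by
    intro P hmem
    induction hmem using Submodule.span_induction with
    | mem x hx =>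
      obtain ⟨k, hk, rfl⟩ := hx
      simp only [Finset.mem_union, Finset.mem_singleton, Finset.mem_Icc] at hk
      rcases hk with rfl | ⟨h2, -⟩
      · obtain ⟨m, rfl⟩ : ∃ m, n = m + 1 := ⟨n - 1, by omega⟩
        simp [derivative_pow, hL]
        field_simp
        ring
      · obtain ⟨j, rfl⟩ : ∃ j, k = j + 2 := ⟨k - 2, by omega⟩
        simp [derivative_pow, hM]
    | zero => simp
    | add x y _ _ hx hy =>
      simp only [derivative_add, eval_add]
      linear_combination hx + hy
    | smul a x _ hx =>
      simp only [derivative_smul, eval_smul, smul_eq_mul]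
      linear_combination a * hx
  refine ⟨hfor P, fun h => ?_⟩
  obtain ⟨c, Q, hQ, hPQ⟩ := step_aux n α β γ δ hdet hα P hP
  obtain ⟨d, R, hR, hQR⟩ := step_aux (n - 1) α β γ δ hdet hα Q hQ
  have h1 : C c * (C γ * X + C δ) ^ n ∈ mobiusModule n α β γ δ := by
    rw [← smul_eq_C_mul]
    apply Submodule.smul_mem
    simpa using hmod 0 (by simp)
  have h2 : (C α * X + C β) ^ 2 * R ∈ mobiusModule n α β γ δ := by
    apply gen_aux α β γ δ hdet hα _ (n - 2) _ _ (by omega)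
    intro k hk
    have := hmod (k + 2) (by simp; omega)
    rw [show n - (k + 2) = n - 2 - k by omega] at this
    convert this using 1
    ring
  have hP' : P = C c * (C γ * X + C δ) ^ n + (C α * X + C β) ^ 2 * R
      + C d * ((C α * X + C β) * (C γ * X + C δ) ^ (n - 1)) := by
    rw [hPQ, hQR]
    ring
  have h3 := hfor _ (Submodule.add_mem _ h1 h2)
  have h4 : (derivative (C d * ((C α * X + C β) * (C γ * X + C δ) ^ (n - 1)))).eval (-β / α)
      - n * α * γ * (C d * ((C α * X + C β) * (C γ * X + C δ) ^ (n - 1))).eval (-β / α) = 0 := by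
    rw [hP', derivative_add, eval_add, eval_add] at h
    linear_combination h - h3
  have hd : d = 0 := by
    simpa [hM, hL, hα] using h4
  rw [hP', hd]
  simpa using Submodule.add_mem _ h1 h2
end

section
/- Let n ≥ 4 and let α, β, γ, δ ∈ ℝ with αδ − βγ = 1, α ≠ 0, γ ≠ 0, and let ℳ_n = span{(γw + δ)^{n−k}(αw + β)^k : k = 0, 2, 3, …, n} ⊆ ℝ[w]. A triple (a,b,c) of real rational functions satisfies a·f'' + b·f' + c·f ∈ ℳ_n for all f ∈ ℳ_n if and only if the operator T f = a f'' + b f' + c f is a real linear combination of the seven operators: J₁f = (αw+β)⁴f'' + 2α(1−n)(αw+β)³f' + n(n−1)α²(αw+β)²f; J₂f = (αw+β)³f'' + α(1−n)(αw+β)²f'; J₃f = (αw+β)²f''; J₄f = (αw+β)f'' − α(1 + nγ(αw+β))f'; J₅f = f'' − (2α/(αw+β))f' − 2nαγ f' + (2nα²γ/(αw+β))f; J₆f = (αw+β)²f' − nα(αw+β)f + ((αw+β)/γ)f'; J₇f = f. -/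
open Polynomial

/-- The action of a triple `(a,b,c)` of real rational functions on a polynomial `f`:
`T f = a·f'' + b·f' + c·f`, computed in `ℝ(w)`. -/
noncomputable def ratTripleApply (a b c : RatFunc ℝ) (f : Polynomial ℝ) : RatFunc ℝ :=
  a * algebraMap (Polynomial ℝ) (RatFunc ℝ) (Polynomial.derivative (Polynomial.derivative f)) +
    b * algebraMap (Polynomial ℝ) (RatFunc ℝ) (Polynomial.derivative f) +
    c * algebraMap (Polynomial ℝ) (RatFunc ℝ) f

/-- The rational function `αw + β`. -/
noncomputable def affineRat (α β : ℝ) : RatFunc ℝ :=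
  algebraMap (Polynomial ℝ) (RatFunc ℝ) (Polynomial.C α * Polynomial.X + Polynomial.C β)

/-- Real constants viewed as rational functions. -/
noncomputable def constRat : ℝ → RatFunc ℝ := algebraMap ℝ (RatFunc ℝ)

/-- The module in the variable `u = αw+β`. -/
noncomputable def uMod (n : ℕ) (γ : ℝ) : Submodule ℝ (Polynomial ℝ) where
  carrier := {Q | (∀ m, n < m → Q.coeff m = 0) ∧ Q.coeff 1 = n * γ * Q.coeff 0}
  zero_mem' := by simp
  add_mem' := by
    rintro p q ⟨h1, h2⟩ ⟨h3, h4⟩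
    refine ⟨fun m hm => by simp [h1 m hm, h3 m hm], ?_⟩
    simp [h2, h4]; ring
  smul_mem' := by
    rintro r p ⟨h1, h2⟩
    refine ⟨fun m hm => by simp [h1 m hm], ?_⟩
    simp [h2]; ring

lemma mem_uMod {n : ℕ} {γ : ℝ} {Q : Polynomial ℝ} : Q ∈ uMod n γ ↔
    (∀ m, n < m → Q.coeff m = 0) ∧ Q.coeff 1 = n * γ * Q.coeff 0 := Iff.rfl

lemma high_mem (n : ℕ) (S : Submodule ℝ (Polynomial ℝ))
    (hX : ∀ k, 2 ≤ k → k ≤ n → (X : Polynomial ℝ) ^ k ∈ S) (Q : Polynomial ℝ)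
    (hQ : ∀ m, n < m → Q.coeff m = 0) (h0 : Q.coeff 0 = 0) (h1 : Q.coeff 1 = 0) : Q ∈ S := by
  rw [Q.as_sum_support_C_mul_X_pow]
  refine S.sum_mem fun i hi => ?_
  rw [← Polynomial.smul_eq_C_mul]
  refine S.smul_mem _ (hX i ?_ ?_)
  · by_contra h
    have : i = 0 ∨ i = 1 := by omega
    rw [mem_support_iff] at hi
    rcases this with rfl | rfl <;> contradiction
  · by_contra h
    rw [mem_support_iff] at hi
    exact hi (hQ i (by omega))

lemma uMod_le (n : ℕ) (hn : 4 ≤ n) (γ : ℝ) (S : Submodule ℝ (Polynomial ℝ))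
    (hX : ∀ k, 2 ≤ k → k ≤ n → (X : Polynomial ℝ) ^ k ∈ S)
    (he : 1 + C (n * γ) * X ∈ S) : uMod n γ ≤ S := by
  rintro Q ⟨h1, h2⟩
  have : Q - C (Q.coeff 0) * (1 + C (n * γ) * X) ∈ S := by
    apply high_mem n S hX
    · intro m hm
      have : m ≠ 0 := by omega
      have h' : m ≠ 1 := by omega
      simp only [coeff_sub, coeff_C_mul, coeff_add, h1 m hm, coeff_one, coeff_X]
      simp [this, h'.symm]
    · simp
    · simp [coeff_one, h2]; ring
  have h3 := S.add_mem this (S.smul_mem (Q.coeff 0) he)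
  rwa [Polynomial.smul_eq_C_mul, sub_add_cancel] at h3

lemma X_pow_mem_uMod {n k : ℕ} (γ : ℝ) (h2 : 2 ≤ k) (hk : k ≤ n) :
    (X : Polynomial ℝ) ^ k ∈ uMod n γ := by
  refine ⟨fun m hm => ?_, ?_⟩
  · rw [coeff_X_pow, if_neg (by omega)]
  · rw [coeff_X_pow, coeff_X_pow, if_neg (by omega), if_neg (by omega)]; simp

lemma e_mem_uMod {n : ℕ} (hn : 4 ≤ n) (γ : ℝ) :
    (1 + C (n * γ) * X : Polynomial ℝ) ∈ uMod n γ := by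
  refine ⟨fun m hm => ?_, ?_⟩
  · have : m ≠ 0 := by omega
    have h' : m ≠ 1 := by omega
    simp only [coeff_C_mul, coeff_add, coeff_one, coeff_X]
    simp [this, h'.symm]
  · simp [coeff_one]

lemma coeff_lin_pow (γ : ℝ) (n : ℕ) :
    ((1 + C γ * X : Polynomial ℝ) ^ n).coeff 0 = 1 ∧
    ((1 + C γ * X : Polynomial ℝ) ^ n).coeff 1 = n * γ := by
  induction n with
  | zero => simp [coeff_one]
  | succ n ih =>
    rw [pow_succ]
    constructor
    · rw [mul_coeff_zero, ih.1]; simp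
    · rw [mul_add, mul_one, coeff_add, ih.2, ← mul_assoc, coeff_mul_X, coeff_mul_C, ih.1]
      push_cast; ring

lemma deg_lin_pow (γ : ℝ) (n : ℕ) : ((1 + C γ * X : Polynomial ℝ) ^ n).natDegree ≤ n := by
  have : (1 + C γ * X : Polynomial ℝ).natDegree ≤ 1 := by compute_degree
  simpa using natDegree_pow_le_of_le n this

lemma mobius_eq (n : ℕ) (hn : 4 ≤ n) (α β γ δ : ℝ)
    (hdet : α * δ - β * γ = 1) (hα : α ≠ 0) :
    mobiusModule n α β γ δ = (uMod n γ).map (aeval (C α * X + C β : Polynomial ℝ)).toLinearMap := by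
  set l : Polynomial ℝ := C α * X + C β with hl
  set v : Polynomial ℝ := C γ * X + C δ with hv
  have hlv : C α * v = 1 + C γ * l := by
    have : (C α * C δ - C β * C γ : Polynomial ℝ) = 1 := by
      rw [← C_mul, ← C_mul, ← C_sub, hdet, C_1]
    rw [hl, hv]; linear_combination this
  have hgen : ∀ k, k = 0 ∨ 2 ≤ k → k ≤ n → v ^ (n-k) * l ^ k ∈ mobiusModule n α β γ δ := by
    intro k hk hkn
    refine Submodule.subset_span ⟨k, ?_, rfl⟩
    simp; omega
  have hv' : v = C α⁻¹ * (1 + C γ * l) := by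
    rw [← hlv, ← mul_assoc, ← C_mul, inv_mul_cancel₀ hα]; simp
  apply le_antisymm
  · rw [mobiusModule, Submodule.span_le]
    rintro q ⟨k, hk, rfl⟩
    have hk' : k = 0 ∨ 2 ≤ k ∧ k ≤ n := by simpa using hk
    refine ⟨C ((α⁻¹)^(n-k)) * ((1 + C γ * X)^(n-k) * X^k), ?_, ?_⟩
    · change _ ∈ uMod n γ
      rw [← Polynomial.smul_eq_C_mul]
      apply Submodule.smul_mem
      refine ⟨fun m hm => ?_, ?_⟩
      · apply coeff_eq_zero_of_natDegree_lt
        refine lt_of_le_of_lt (natDegree_mul_le) ?_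
        have := deg_lin_pow γ (n-k)
        rw [natDegree_X_pow]; omega
      · rcases hk' with rfl | ⟨h2, hkn⟩
        · simp [coeff_lin_pow]
        · rw [coeff_mul_X_pow', coeff_mul_X_pow', if_neg (by omega), if_neg (by omega)]; simp
    · change aeval l _ = v ^ (n-k) * l ^ k
      rw [hv', mul_pow]
      simp only [map_mul, map_pow, map_add, map_one, aeval_C, aeval_X, algebraMap_eq]
      ring
  · rw [Submodule.map_le_iff_le_comap]
    have hX : ∀ k, 2 ≤ k → k ≤ n → (X : Polynomial ℝ) ^ k ∈
        (mobiusModule n α β γ δ).comap (aeval l).toLinearMap := by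
      intro k h2 hkn
      rw [Submodule.mem_comap, AlgHom.toLinearMap_apply]
      have h1 : aeval l (X ^ k : Polynomial ℝ) = (C α * v + C (-γ) * l) ^ (n-k) * l ^ k := by
        rw [hlv]; simp
      rw [h1, add_pow, Finset.sum_mul]
      refine Submodule.sum_mem _ fun i hi => ?_
      rw [Finset.mem_range] at hi
      have h3 := Submodule.smul_mem _ (α ^ i * (-γ) ^ (n-k-i) * ((n-k).choose i : ℝ))
        (hgen (n-i) (by omega) (by omega))
      convert h3 using 1
      rw [Polynomial.smul_eq_C_mul]
      have e1 : n - (n - i) = i := by omega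
      have e2 : n - i = (n-k-i) + k := by omega
      rw [e1, e2, pow_add]
      simp only [mul_pow, C_mul, C_pow, C_neg, map_natCast]
      ring
    refine uMod_le n hn γ _ hX ?_
    have h4 : (1 + C γ * X : Polynomial ℝ) ^ n ∈
        (mobiusModule n α β γ δ).comap (aeval l).toLinearMap := by
      rw [Submodule.mem_comap, AlgHom.toLinearMap_apply]
      have h3 := Submodule.smul_mem _ (α ^ n) (hgen 0 (by omega) (by omega))
      convert h3 using 1
      rw [Polynomial.smul_eq_C_mul]
      simp only [Nat.sub_zero, pow_zero, mul_one, C_pow, ← mul_pow, hlv]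
      simp [algebraMap_eq]
    have h5 : (1 + C (n * γ) * X : Polynomial ℝ) - (1 + C γ * X) ^ n ∈
        (mobiusModule n α β γ δ).comap (aeval l).toLinearMap := by
      apply high_mem n _ hX
      · intro m hm
        rw [coeff_sub, (e_mem_uMod hn γ).1 m hm, coeff_eq_zero_of_natDegree_lt
          (lt_of_le_of_lt (deg_lin_pow γ n) hm), sub_zero]
      · rw [coeff_sub, (coeff_lin_pow γ n).1]; simp
      · rw [coeff_sub, (coeff_lin_pow γ n).2]; simp [coeff_one]
    have := Submodule.add_mem _ h5 h4
    rwa [sub_add_cancel] at this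

/-- The second-order operator in the variable `u`. -/
noncomputable def uOp (u A B D : RatFunc ℝ) (Q : Polynomial ℝ) : RatFunc ℝ :=
  A * aeval u (derivative (derivative Q)) + B * aeval u (derivative Q) + D * aeval u Q

lemma affine_aeval (α β : ℝ) (Q : Polynomial ℝ) :
    algebraMap (Polynomial ℝ) (RatFunc ℝ) (aeval (C α * X + C β : Polynomial ℝ) Q)
      = aeval (affineRat α β) Q := by
  rw [affineRat, aeval_algebraMap_apply]

lemma affine_inj (α β : ℝ) (hα : α ≠ 0) (P Q : Polynomial ℝ)
    (h : aeval (affineRat α β) P = aeval (affineRat α β) Q) : P = Q := by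
  rw [← affine_aeval, ← affine_aeval] at h
  have h2 := FaithfulSMul.algebraMap_injective (Polynomial ℝ) (RatFunc ℝ) h
  have h3 := congrArg (aeval (C α⁻¹ * (X - C β) : Polynomial ℝ)) h2
  have h4 : ∀ R : Polynomial ℝ, aeval (C α⁻¹ * (X - C β) : Polynomial ℝ)
      (aeval (C α * X + C β : Polynomial ℝ) R) = R := by
    intro R
    rw [← aeval_algHom_apply]
    have : (aeval (C α⁻¹ * (X - C β) : Polynomial ℝ)) (C α * X + C β : Polynomial ℝ) = X := by
      simp [algebraMap_eq, ← mul_assoc, ← C_mul, mul_inv_cancel₀ hα]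
    rw [this]; simp
  rwa [h4, h4] at h3

lemma affine_ne (α β : ℝ) (hα : α ≠ 0) : affineRat α β ≠ 0 := by
  intro h
  have := affine_inj α β hα X 0 (by simp [h])
  exact X_ne_zero this

lemma triple_eq (α β : ℝ) (a b c : RatFunc ℝ) (Q : Polynomial ℝ) :
    ratTripleApply a b c (aeval (C α * X + C β : Polynomial ℝ) Q) =
    uOp (affineRat α β) (constRat α ^ 2 * a) (constRat α * b) c Q := by
  have hd : ∀ Q : Polynomial ℝ, derivative (aeval (C α * X + C β : Polynomial ℝ) Q)
      = C α * aeval (C α * X + C β : Polynomial ℝ) (derivative Q) := by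
    intro Q
    rw [← comp_eq_aeval, ← comp_eq_aeval, derivative_comp]; simp
  have hc : algebraMap (Polynomial ℝ) (RatFunc ℝ) (C α) = constRat α := by
    rw [constRat, ← algebraMap_eq, ← IsScalarTower.algebraMap_apply]
  rw [ratTripleApply, uOp, hd, derivative_C_mul, hd, map_mul, map_mul, map_mul, hc,
    affine_aeval, affine_aeval, affine_aeval]
  ring

lemma preserves_iff (n : ℕ) (hn : 4 ≤ n) (α β γ δ : ℝ)
    (hdet : α * δ - β * γ = 1) (hα : α ≠ 0) (a b c : RatFunc ℝ) :
    (∀ f ∈ mobiusModule n α β γ δ,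
        ratTripleApply a b c f ∈
          (mobiusModule n α β γ δ).map
            (IsScalarTower.toAlgHom ℝ (Polynomial ℝ) (RatFunc ℝ)).toLinearMap) ↔
    ∀ Q ∈ uMod n γ, ∃ R ∈ uMod n γ,
      uOp (affineRat α β) (constRat α ^ 2 * a) (constRat α * b) c Q = aeval (affineRat α β) R := by
  rw [mobius_eq n hn α β γ δ hdet hα]
  constructor
  · intro h Q hQ
    obtain ⟨f, ⟨R, hR, rfl⟩, hf⟩ := h _ ⟨Q, hQ, rfl⟩
    refine ⟨R, hR, ?_⟩
    rw [← triple_eq, ← affine_aeval]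
    exact hf.symm
  · rintro h f ⟨Q, hQ, rfl⟩
    obtain ⟨R, hR, h2⟩ := h Q hQ
    refine ⟨_, ⟨R, hR, rfl⟩, ?_⟩
    rw [← triple_eq, ← affine_aeval] at h2
    exact h2.symm

set_option linter.unusedSimpArgs false

/-- Preservation of `uMod`. -/
def Pres (n : ℕ) (γ : ℝ) (u A B D : RatFunc ℝ) : Prop :=
  ∀ Q ∈ uMod n γ, ∃ R ∈ uMod n γ, uOp u A B D Q = aeval u R

lemma Pres.add {n : ℕ} {γ : ℝ} {u A B D A' B' D' : RatFunc ℝ} (h : Pres n γ u A B D)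
    (h' : Pres n γ u A' B' D') : Pres n γ u (A + A') (B + B') (D + D') := by
  intro Q hQ
  obtain ⟨R, hR, e⟩ := h Q hQ
  obtain ⟨R', hR', e'⟩ := h' Q hQ
  refine ⟨R + R', Submodule.add_mem _ hR hR', ?_⟩
  rw [map_add, ← e, ← e', uOp, uOp, uOp]; ring

lemma Pres.smul {n : ℕ} {γ : ℝ} {u A B D : RatFunc ℝ} (r : ℝ) (h : Pres n γ u A B D) :
    Pres n γ u (constRat r * A) (constRat r * B) (constRat r * D) := by
  intro Q hQ
  obtain ⟨R, hR, e⟩ := h Q hQ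
  refine ⟨r • R, Submodule.smul_mem _ _ hR, ?_⟩
  rw [map_smul, ← e, Algebra.smul_def, uOp, uOp]
  change _ = constRat r * _
  ring

lemma uOp_X_pow (u A B D : RatFunc ℝ) (i : ℕ) :
    uOp u A B D (X ^ (i + 2)) = A * ((i + 2) * (i + 1) * u ^ i) + B * ((i + 2) * u ^ (i + 1))
      + D * u ^ (i + 2) := by
  simp [uOp, derivative_X_pow]
  ring

lemma uOp_e (u A B D : RatFunc ℝ) (n : ℕ) (γ : ℝ) :
    uOp u A B D (1 + C (n * γ) * X) = B * (n * constRat γ) + D * (1 + n * constRat γ * u) := by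
  simp [uOp, constRat]

lemma Pres.of_gen {n : ℕ} (hn : 4 ≤ n) {γ : ℝ} {u A B D : RatFunc ℝ}
    (h : ∀ i, i + 2 ≤ n → ∃ R ∈ uMod n γ,
      A * ((i + 2) * (i + 1) * u ^ i) + B * ((i + 2) * u ^ (i + 1)) + D * u ^ (i + 2)
      = aeval u R)
    (he : ∃ R ∈ uMod n γ, B * (n * constRat γ) + D * (1 + n * constRat γ * u) = aeval u R) :
    Pres n γ u A B D := by
  let S : Submodule ℝ (Polynomial ℝ) :=
    { carrier := {Q | ∃ R ∈ uMod n γ, uOp u A B D Q = aeval u R}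
      zero_mem' := ⟨0, Submodule.zero_mem _, by simp [uOp]⟩
      add_mem' := by
        rintro p q ⟨R, hR, e⟩ ⟨R', hR', e'⟩
        refine ⟨R + R', Submodule.add_mem _ hR hR', ?_⟩
        rw [map_add, ← e, ← e']; simp [uOp]; ring
      smul_mem' := by
        rintro r p ⟨R, hR, e⟩
        refine ⟨r • R, Submodule.smul_mem _ _ hR, ?_⟩
        rw [map_smul, ← e]; simp [uOp, Algebra.smul_def]; ring }
  have : uMod n γ ≤ S := by
    apply uMod_le n hn
    · intro k h2 hk
      obtain ⟨i, rfl⟩ : ∃ i, k = i + 2 := ⟨k - 2, by omega⟩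
      obtain ⟨R, hR, e⟩ := h i hk
      exact ⟨R, hR, by rw [uOp_X_pow, e]⟩
    · obtain ⟨R, hR, e⟩ := he
      exact ⟨R, hR, by rw [uOp_e, e]⟩
  exact this

lemma mono_mem {n k : ℕ} (γ r : ℝ) (h2 : 2 ≤ k) (hk : k ≤ n ∨ r = 0) :
    C r * (X : Polynomial ℝ) ^ k ∈ uMod n γ := by
  rcases hk with hk | rfl
  · rw [← Polynomial.smul_eq_C_mul]; exact Submodule.smul_mem _ _ (X_pow_mem_uMod γ h2 hk)
  · simp

lemma pres1 {n : ℕ} (hn : 4 ≤ n) (γ : ℝ) (u : RatFunc ℝ) :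
    Pres n γ u (u ^ 4) (2 * (1 - n) * u ^ 3) (n * (n - 1) * u ^ 2) := by
  apply Pres.of_gen hn
  · intro i hi
    refine ⟨C (((i:ℝ) + 2 - n) * (i + 3 - n)) * X ^ (i + 4), mono_mem γ _ (by omega) ?_, ?_⟩
    · by_cases h : i + 4 ≤ n
      · exact Or.inl h
      · right
        have : n = i + 2 ∨ n = i + 3 := by omega
        rcases this with rfl | rfl <;> push_cast <;> ring
    · simp only [map_add, map_sub, map_mul, map_pow, map_neg, map_one, map_zero, map_ofNat, map_natCast,
      map_div₀, aeval_X, aeval_C, constRat]; ring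
  · refine ⟨C ((n:ℝ) * (n - 1)) * X ^ 2 + C (n * γ * ((n - 1) * (n - 2))) * X ^ 3,
      Submodule.add_mem _ (mono_mem (n := n) (k := 2) γ _ (le_refl 2) (Or.inl (show 2 ≤ n by omega)))
       (mono_mem (n := n) (k := 3) γ _ (by norm_num) (Or.inl (show 3 ≤ n by omega))), ?_⟩
    simp only [map_add, map_sub, map_mul, map_pow, map_neg, map_one, map_zero, map_ofNat, map_natCast,
      map_div₀, aeval_X, aeval_C, constRat]; ring

lemma pres2 {n : ℕ} (hn : 4 ≤ n) (γ : ℝ) (u : RatFunc ℝ) :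
    Pres n γ u (u ^ 3) ((1 - n) * u ^ 2) 0 := by
  apply Pres.of_gen hn
  · intro i hi
    refine ⟨C (((i:ℝ) + 2 - n) * (i + 2)) * X ^ (i + 3), mono_mem γ _ (by omega) ?_, ?_⟩
    · by_cases h : i + 3 ≤ n
      · exact Or.inl h
      · right
        have : n = i + 2 := by omega
        rcases this with rfl; push_cast; ring
    · simp only [map_add, map_sub, map_mul, map_pow, map_neg, map_one, map_zero, map_ofNat, map_natCast,
      map_div₀, aeval_X, aeval_C, constRat]; ring
  · refine ⟨C (n * γ * (1 - n)) * X ^ 2,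
      (mono_mem γ _ (by omega) (Or.inl (by omega))), ?_⟩
    simp only [map_add, map_sub, map_mul, map_pow, map_neg, map_one, map_zero, map_ofNat, map_natCast,
      map_div₀, aeval_X, aeval_C, constRat]; ring

lemma pres3 {n : ℕ} (hn : 4 ≤ n) (γ : ℝ) (u : RatFunc ℝ) :
    Pres n γ u (u ^ 2) 0 0 := by
  apply Pres.of_gen hn
  · intro i hi
    refine ⟨C (((i:ℝ) + 2) * (i + 1)) * X ^ (i + 2), mono_mem γ _ (by omega) (Or.inl hi), ?_⟩
    simp only [map_add, map_sub, map_mul, map_pow, map_neg, map_one, map_zero, map_ofNat, map_natCast,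
      map_div₀, aeval_X, aeval_C, constRat]; ring
  · exact ⟨0, Submodule.zero_mem _, by simp⟩

lemma pres4 {n : ℕ} (hn : 4 ≤ n) (γ : ℝ) (u : RatFunc ℝ) :
    Pres n γ u u (-(1 + n * constRat γ * u)) 0 := by
  apply Pres.of_gen hn
  · intro i hi
    refine ⟨C (((i:ℝ) + 2) * i) * X ^ (i + 1) + C (-(n * γ * (i + 2))) * X ^ (i + 2),
      Submodule.add_mem _ ?_ (mono_mem γ _ (by omega) (Or.inl hi)), ?_⟩
    · by_cases h : i = 0
      · subst h; simp
      · exact mono_mem γ _ (by omega) (Or.inl (by omega))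
    · simp only [map_add, map_sub, map_mul, map_pow, map_neg, map_one, map_zero, map_ofNat, map_natCast,
      map_div₀, aeval_X, aeval_C, constRat]; ring
  · refine ⟨C (-(n * γ)) * (1 + C (n * γ) * X), ?_, ?_⟩
    · rw [← Polynomial.smul_eq_C_mul]; exact Submodule.smul_mem _ _ (e_mem_uMod hn γ)
    · simp only [map_add, map_sub, map_mul, map_pow, map_neg, map_one, map_zero, map_ofNat, map_natCast,
      map_div₀, aeval_X, aeval_C, constRat]; ring

lemma pres5 {n : ℕ} (hn : 4 ≤ n) (γ : ℝ) (u : RatFunc ℝ) (hu : u ≠ 0) :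
    Pres n γ u 1 (-2 / u - 2 * n * constRat γ) (2 * n * constRat γ / u) := by
  apply Pres.of_gen hn
  · intro i hi
    refine ⟨C (((i:ℝ) + 2) * (i - 1)) * X ^ i + C (-(2 * n * γ * (i + 1))) * X ^ (i + 1),
      ?_, ?_⟩
    · have : i = 0 ∨ i = 1 ∨ 2 ≤ i := by omega
      rcases this with rfl | rfl | h
      · have := Submodule.smul_mem _ (-2) (e_mem_uMod hn γ)
        rw [Polynomial.smul_eq_C_mul] at this
        convert this using 1
        simp; ring
      · have := mono_mem (n := n) γ (-(2 * n * γ * ((1:ℕ) + 1))) (le_refl 2) (Or.inl (by omega))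
        convert this using 1
        simp
      · exact Submodule.add_mem _ (mono_mem γ _ (by omega) (Or.inl (by omega)))
          (mono_mem γ _ (by omega) (Or.inl (by omega)))
    · simp only [map_add, map_sub, map_mul, map_pow, map_neg, map_one, map_zero, map_ofNat, map_natCast,
      map_div₀, aeval_X, aeval_C, constRat]; field_simp; ring
  · refine ⟨0, Submodule.zero_mem _, ?_⟩
    simp only [map_add, map_sub, map_mul, map_pow, map_neg, map_one, map_zero, map_ofNat, map_natCast,
      map_div₀, aeval_X, aeval_C, constRat]; field_simp; ring

lemma pres6 {n : ℕ} (hn : 4 ≤ n) (γ : ℝ) (hγ : γ ≠ 0) (u : RatFunc ℝ) :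
    Pres n γ u 0 (u ^ 2 + u / constRat γ) (-n * u) := by
  have hg : (algebraMap ℝ (RatFunc ℝ)) γ ≠ 0 := by simpa using hγ
  apply Pres.of_gen hn
  · intro i hi
    refine ⟨C ((i:ℝ) + 2 - n) * X ^ (i + 3) + C ((i + 2) / γ) * X ^ (i + 2),
      Submodule.add_mem _ (mono_mem γ _ (by omega) ?_) (mono_mem γ _ (by omega) (Or.inl hi)), ?_⟩
    · by_cases h : i + 3 ≤ n
      · exact Or.inl h
      · right
        have : n = i + 2 := by omega
        rcases this with rfl; push_cast; ring
    · simp only [map_add, map_sub, map_mul, map_pow, map_neg, map_one, map_zero, map_ofNat, map_natCast,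
      map_div₀, aeval_X, aeval_C, constRat]; field_simp; ring
  · refine ⟨C (n * γ * (1 - n)) * X ^ 2,
      (mono_mem γ _ (by omega) (Or.inl (by omega))), ?_⟩
    simp only [map_add, map_sub, map_mul, map_pow, map_neg, map_one, map_zero, map_ofNat, map_natCast,
      map_div₀, aeval_X, aeval_C, constRat]; field_simp; ring

lemma pres7 {n : ℕ} (γ : ℝ) (u : RatFunc ℝ) : Pres n γ u 0 0 1 :=
  fun Q hQ => ⟨Q, hQ, by simp [uOp]⟩

lemma forward_core (n : ℕ) (hn : 4 ≤ n) (γ : ℝ) (u A B D : RatFunc ℝ) (hu : u ≠ 0)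
    (hinj : ∀ P Q : Polynomial ℝ, aeval u P = aeval u Q → P = Q)
    (h : Pres n γ u A B D) :
    ∃ (F G H : Polynomial ℝ), A * u ^ 2 = aeval u F ∧ B * u ^ 3 = aeval u G ∧
      D * u ^ 4 = aeval u H ∧
      (∀ k j, 2 ≤ k → k ≤ n → (n + 4 < k + j ∨ k + j < 4) →
        (k:ℝ) * (k - 1) * F.coeff j + k * G.coeff j + H.coeff j = 0) ∧
      (∀ k j, 2 ≤ k → k ≤ n → k + j = 4 →
        (k:ℝ) * (k - 1) * F.coeff (j+1) + k * G.coeff (j+1) + H.coeff (j+1) =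
        n * γ * ((k:ℝ) * (k - 1) * F.coeff j + k * G.coeff j + H.coeff j)) ∧
      (H.coeff 0 = 0) ∧
      (∀ j, j < 3 → H.coeff (j+1) + n * γ * (G.coeff j + H.coeff j) = 0) ∧
      (H.coeff 5 + n * γ * (G.coeff 4 + H.coeff 4) =
        n * γ * (H.coeff 4 + n * γ * (G.coeff 3 + H.coeff 3))) := by
  have hk : ∀ k, 2 ≤ k → k ≤ n → ∃ R ∈ uMod n γ,
      A * ((k:RatFunc ℝ) * (k - 1) * u ^ k) + B * (k * u ^ (k + 1)) + D * u ^ (k + 2)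
      = u ^ 2 * aeval u R := by
    intro k h2 hkn
    obtain ⟨R, hR, e⟩ := h _ (X_pow_mem_uMod γ h2 hkn)
    refine ⟨R, hR, ?_⟩
    obtain ⟨i, rfl⟩ : ∃ i, k = i + 2 := ⟨k - 2, by omega⟩
    rw [← e, uOp_X_pow]; push_cast; ring
  obtain ⟨q0, hq0, e0⟩ := h _ (e_mem_uMod hn γ)
  rw [uOp_e] at e0
  obtain ⟨q2, hq2, e2⟩ := hk 2 (by omega) (by omega)
  obtain ⟨q3, hq3, e3⟩ := hk 3 (by omega) (by omega)
  obtain ⟨q4, hq4, e4⟩ := hk 4 (by omega) (by omega)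
  obtain ⟨F, hF⟩ : ∃ F, F = C (1/2 : ℝ) * (q4 - 2 * X * q3 + X ^ 2 * q2) := ⟨_, rfl⟩
  obtain ⟨G, hG⟩ : ∃ G, G = X * q3 - X ^ 2 * q2 - 4 * F := ⟨_, rfl⟩
  obtain ⟨H, hH⟩ : ∃ H, H = X ^ 2 * q2 - 2 * F - 2 * G := ⟨_, rfl⟩
  have hFA : A * u ^ 2 = aeval u F := by
    have h2 : (algebraMap ℝ (RatFunc ℝ)) (1/2) = 1/2 := by
      rw [map_div₀, map_one, map_ofNat]
    rw [hF, map_mul, aeval_C, h2]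
    simp only [map_add, map_sub, map_mul, map_pow, aeval_X, map_ofNat]
    apply mul_left_cancel₀ (pow_ne_zero 2 hu)
    push_cast at e2 e3 e4
    linear_combination (1/2) * e4 - u * e3 + u^2/2 * e2
  have hGB : B * u ^ 3 = aeval u G := by
    rw [hG]
    simp only [map_add, map_sub, map_mul, map_pow, aeval_X, map_ofNat, ← hFA]
    apply mul_left_cancel₀ (pow_ne_zero 2 hu)
    push_cast at e2 e3 e4
    linear_combination u * e3 - u^2 * e2
  have hHD : D * u ^ 4 = aeval u H := by
    rw [hH]
    simp only [map_add, map_sub, map_mul, map_pow, aeval_X, map_ofNat, ← hFA, ← hGB]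
    apply mul_left_cancel₀ (pow_ne_zero 2 hu)
    push_cast at e2 e3 e4
    linear_combination u^2 * e2
  have key : ∀ k, 2 ≤ k → k ≤ n → ∃ R ∈ uMod n γ,
      (C ((k:ℝ) * (k - 1)) * F + C (k:ℝ) * G + H) * X ^ k = R * X ^ 4 := by
    intro k h2 hkn
    obtain ⟨R, hR, e⟩ := hk k h2 hkn
    refine ⟨R, hR, hinj _ _ ?_⟩
    simp only [map_add, map_sub, map_mul, map_pow, aeval_X, aeval_C, ← hFA, ← hGB, ← hHD,
      map_natCast, map_one]
    linear_combination u ^ 2 * e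
  have key' : ∀ k, 2 ≤ k → k ≤ n → ∃ R ∈ uMod n γ, ∀ j,
      (k:ℝ) * (k - 1) * F.coeff j + k * G.coeff j + H.coeff j =
      if 4 ≤ k + j then R.coeff (k + j - 4) else 0 := by
    intro k h2 hkn
    obtain ⟨R, hR, e⟩ := key k h2 hkn
    refine ⟨R, hR, fun j => ?_⟩
    have := congrArg (fun p => coeff p (j + k)) e
    simp only [coeff_mul_X_pow, coeff_add, coeff_C_mul] at this
    rw [this, coeff_mul_X_pow', add_comm j k]
  have keye : C (n * γ) * G * X + (1 + C (n * γ) * X) * H = q0 * X ^ 4 := by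
    apply hinj
    simp only [map_add, map_sub, map_mul, map_pow, aeval_X, aeval_C, ← hFA, ← hGB, ← hHD,
      map_natCast, map_one, ← e0, constRat]
    ring
  have keyj : ∀ j, H.coeff (j+1) + n * γ * (G.coeff j + H.coeff j) =
      if 4 ≤ j + 1 then q0.coeff (j + 1 - 4) else 0 := by
    intro j
    have := congrArg (fun p => coeff p (j + 1)) keye
    simp only [add_mul, one_mul, coeff_mul_X_pow', coeff_add, coeff_C_mul, coeff_mul_X,
      mul_assoc, coeff_X_mul] at this
    rw [← this]; ring
  refine ⟨F, G, H, hFA, hGB, hHD, ?_, ?_, ?_, ?_, ?_⟩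
  · intro k j h2 hkn hj
    obtain ⟨R, hR, e⟩ := key' k h2 hkn
    rw [e]
    split_ifs with h4
    · exact hR.1 _ (by omega)
    · rfl
  · intro k j h2 hkn hj
    obtain ⟨R, hR, e⟩ := key' k h2 hkn
    rw [e, e, if_pos (by omega), if_pos (by omega)]
    have e1 : k + (j+1) - 4 = 1 := by omega
    have e2 : k + j - 4 = 0 := by omega
    rw [e1, e2, hR.2]
  · have := congrArg (fun p => coeff p 0) keye
    simpa [mul_coeff_zero] using this
  · intro j hj
    rw [keyj, if_neg (by omega)]
  · rw [keyj, keyj]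
    simpa using hq0.2

lemma forward_form (n : ℕ) (hn : 4 ≤ n) (γ : ℝ) (hγ : γ ≠ 0) (u A B D : RatFunc ℝ) (hu : u ≠ 0)
    (hinj : ∀ P Q : Polynomial ℝ, aeval u P = aeval u Q → P = Q)
    (h : Pres n γ u A B D) :
    ∃ x1 x2 x3 x4 x5 x6 x7 : ℝ,
      A = constRat x1 * u ^ 4 + constRat x2 * u ^ 3 + constRat x3 * u ^ 2 + constRat x4 * u
        + constRat x5 ∧
      B = constRat x1 * (2 * (1 - n) * u ^ 3) + constRat x2 * ((1 - n) * u ^ 2)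
        + constRat x4 * (-(1 + n * constRat γ * u))
        + constRat x5 * (-2 / u - 2 * n * constRat γ)
        + constRat x6 * (u ^ 2 + u / constRat γ) ∧
      D = constRat x1 * (n * (n - 1) * u ^ 2) + constRat x5 * (2 * n * constRat γ / u)
        + constRat x6 * (-n * u) + constRat x7 := by
  obtain ⟨F, G, H, hF, hG, hH, hz, hr, h0, he, h5⟩ := forward_core n hn γ u A B D hu hinj h
  have c1 : ((n - 1 : ℕ) : ℝ) = n - 1 := by rw [Nat.cast_sub (by omega)]; simp
  have c2 : ((n - 2 : ℕ) : ℝ) = n - 2 := by rw [Nat.cast_sub (by omega)]; simp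
  have hN : (n : ℝ) ≠ 0 := by
    have : n ≠ 0 := by omega
    exact_mod_cast this
  have big : ∀ j, 7 ≤ j → F.coeff j = 0 ∧ G.coeff j = 0 ∧ H.coeff j = 0 := by
    intro j hj
    have t0 := hz n j (by omega) (by omega) (by omega)
    have t1 := hz (n-1) j (by omega) (by omega) (by omega)
    have t2 := hz (n-2) j (by omega) (by omega) (by omega)
    rw [c1] at t1
    rw [c2] at t2
    have f : F.coeff j = 0 := by linear_combination (t0 - 2 * t1 + t2) / 2
    rw [f] at t0 t1
    have g : G.coeff j = 0 := by linear_combination t0 - t1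
    rw [g] at t0
    exact ⟨f, g, by linear_combination t0⟩
  have t60 := hz n 6 (by omega) (by omega) (by omega)
  have t61 := hz (n-1) 6 (by omega) (by omega) (by omega)
  rw [c1] at t61
  have t50 := hz n 5 (by omega) (by omega) (by omega)
  have t02 := hz 2 0 (by omega) (by omega) (by omega)
  have t03 := hz 3 0 (by omega) (by omega) (by omega)
  have t12 := hz 2 1 (by omega) (by omega) (by omega)
  have r4 := hr 4 0 (by omega) (by omega) (by omega)
  have r3 := hr 3 1 (by omega) (by omega) (by omega)
  have r2 := hr 2 2 (by omega) (by omega) (by omega)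
  have s1 := he 0 (by omega)
  have s2 := he 1 (by omega)
  have s3 := he 2 (by omega)
  norm_num at t02 t03 t12 r4 r3 r2 s1 s2 s3
  have f0 : F.coeff 0 = 0 := by linarith
  have g0 : G.coeff 0 = 0 := by linarith
  rw [f0, g0, h0] at r4
  rw [g0, h0] at s1
  have h1 : H.coeff 1 = 0 := by linarith
  have f1 : F.coeff 1 = 0 := by linarith
  have g1 : G.coeff 1 = 0 := by linarith
  rw [f1, g1, h1] at r3
  rw [g1, h1] at s2
  have h2 : H.coeff 2 = 0 := by linarith
  have g2 : G.coeff 2 = -2 * F.coeff 2 := by linarith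
  rw [g2, h2] at r2 s3
  have h3 : H.coeff 3 = 2 * n * γ * F.coeff 2 := by linarith
  have g3 : G.coeff 3 = -F.coeff 3 - 2 * n * γ * F.coeff 2 := by linarith
  have g6 : G.coeff 6 = F.coeff 6 * (2 * (1 - n)) := by linear_combination t60 - t61
  have h6 : H.coeff 6 = F.coeff 6 * (n * (n - 1)) := by
    rw [g6] at t60; linear_combination t60
  obtain ⟨x6, hx6⟩ : ∃ x6, x6 = G.coeff 5 - (1 - n) * F.coeff 5 := ⟨_, rfl⟩
  have g5 : G.coeff 5 = F.coeff 5 * (1 - n) + x6 := by rw [hx6]; ring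
  have h5' : H.coeff 5 = - n * x6 := by rw [hx6]; linear_combination t50
  have g4 : G.coeff 4 = - n * γ * F.coeff 3 + x6 / γ := by
    rw [h5', g3, h3] at h5
    field_simp
    apply mul_left_cancel₀ hN
    linear_combination h5
  have ex : ∀ P : Polynomial ℝ, (∀ j, 7 ≤ j → P.coeff j = 0) → aeval u P =
      constRat (P.coeff 0) + constRat (P.coeff 1) * u + constRat (P.coeff 2) * u ^ 2
      + constRat (P.coeff 3) * u ^ 3 + constRat (P.coeff 4) * u ^ 4 + constRat (P.coeff 5) * u ^ 5
      + constRat (P.coeff 6) * u ^ 6 := by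
    intro P hP
    have hd : P.natDegree < 7 := by
      rw [Nat.lt_succ_iff, natDegree_le_iff_coeff_eq_zero]
      intro N hN; exact hP N hN
    rw [aeval_eq_sum_range' hd]
    simp only [Finset.sum_range_succ, Finset.sum_range_zero, Algebra.smul_def, constRat]
    ring
  have hg : constRat γ ≠ 0 := by
    rw [constRat]; exact (_root_.map_ne_zero _).2 hγ
  rw [ex F fun j hj => (big j hj).1, f0, f1] at hF
  rw [ex G fun j hj => (big j hj).2.1, g0, g1, g2, g3, g4, g5, g6] at hG
  rw [ex H fun j hj => (big j hj).2.2, h0, h1, h2, h3, h5', h6] at hH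
  refine ⟨F.coeff 6, F.coeff 5, F.coeff 4, F.coeff 3, F.coeff 2, x6, H.coeff 4, ?_, ?_, ?_⟩
  · apply mul_right_cancel₀ (pow_ne_zero 2 hu)
    rw [hF]
    simp only [constRat, map_zero]; ring
  · apply mul_right_cancel₀ (pow_ne_zero 3 hu)
    rw [hG]
    simp only [constRat, map_add, map_sub, map_mul, map_pow, map_neg, map_one, map_zero,
      map_ofNat, map_natCast, map_div₀] at hg ⊢
    field_simp
    ring
  · apply mul_right_cancel₀ (pow_ne_zero 4 hu)
    rw [hH]
    simp only [constRat, map_add, map_sub, map_mul, map_pow, map_neg, map_one, map_zero,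
      map_ofNat, map_natCast, map_div₀] at hg ⊢
    field_simp
    ring

set_option maxHeartbeats 1600000 in
/-- For `n ≥ 4` and `(α, β; γ, δ) ∈ SL(2,ℝ)` with `α, γ ≠ 0`, a triple
`(a,b,c)` of real rational functions satisfies `a·f'' + b·f' + c·f ∈ ℳ_n` for all
`f ∈ ℳ_n` if and only if `T f = a f'' + b f' + c f` is a real linear combination of the
seven operators
`J₁f = (αw+β)⁴f'' + 2α(1−n)(αw+β)³f' + n(n−1)α²(αw+β)²f`,
`J₂f = (αw+β)³f'' + α(1−n)(αw+β)²f'`, `J₃f = (αw+β)²f''`,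
`J₄f = (αw+β)f'' − α(1 + nγ(αw+β))f'`,
`J₅f = f'' − (2α/(αw+β))f' − 2nαγ f' + (2nα²γ/(αw+β))f`,
`J₆f = (αw+β)²f' − nα(αw+β)f + ((αw+β)/γ)f'`, `J₇f = f`. -/
theorem preserves_mobiusModule_iff_combination (n : ℕ) (hn : 4 ≤ n) (α β γ δ : ℝ)
    (hdet : α * δ - β * γ = 1) (hα : α ≠ 0) (hγ : γ ≠ 0) (a b c : RatFunc ℝ) :
    (∀ f ∈ mobiusModule n α β γ δ,
        ratTripleApply a b c f ∈
          (mobiusModule n α β γ δ).map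
            (IsScalarTower.toAlgHom ℝ (Polynomial ℝ) (RatFunc ℝ)).toLinearMap) ↔
    ∃ c₁ c₂ c₃ c₄ c₅ c₆ c₇ : ℝ,
      ((a, b, c) : RatFunc ℝ × RatFunc ℝ × RatFunc ℝ) =
         c₁ • (affineRat α β ^ 4,
               constRat (2 * α * (1 - (n : ℝ))) * affineRat α β ^ 3,
               constRat ((n : ℝ) * ((n : ℝ) - 1) * α ^ 2) * affineRat α β ^ 2) +
         c₂ • (affineRat α β ^ 3,
               constRat (α * (1 - (n : ℝ))) * affineRat α β ^ 2, 0) +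
         c₃ • (affineRat α β ^ 2, 0, 0) +
         c₄ • (affineRat α β,
               -(constRat α) * (1 + constRat ((n : ℝ) * γ) * affineRat α β), 0) +
         c₅ • (1,
               -(constRat (2 * α)) / affineRat α β - constRat (2 * (n : ℝ) * α * γ),
               constRat (2 * (n : ℝ) * α ^ 2 * γ) / affineRat α β) +
         c₆ • (0, affineRat α β ^ 2 + affineRat α β / constRat γ,
               -(constRat ((n : ℝ) * α)) * affineRat α β) +
         c₇ • (0, 0, 1) := by
  have hu := affine_ne α β hα
  have hinj := affine_inj α β hα
  have ha : constRat α ≠ 0 := by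
    rw [constRat]; exact (_root_.map_ne_zero _).2 hα
  have hg : constRat γ ≠ 0 := by
    rw [constRat]; exact (_root_.map_ne_zero _).2 hγ
  rw [preserves_iff n hn α β γ δ hdet hα]
  generalize affineRat α β = u at hu hinj ⊢
  have hsm : ∀ (r : ℝ) (x : RatFunc ℝ), r • x = constRat r * x :=
    fun r x => Algebra.smul_def r x
  have k0 : constRat 0 = 0 := map_zero _
  have k1 : constRat 1 = 1 := map_one _
  have kn : ∀ m : ℕ, constRat m = m := fun m => map_natCast _ m
  have k2 : constRat 2 = 2 := map_ofNat _ 2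
  have km : ∀ x y, constRat (x * y) = constRat x * constRat y := map_mul _
  have ka : ∀ x y, constRat (x + y) = constRat x + constRat y := map_add _
  have ks : ∀ x y, constRat (x - y) = constRat x - constRat y := map_sub _
  have kp : ∀ x (m : ℕ), constRat (x ^ m) = constRat x ^ m := fun x m => map_pow _ x m
  have kd : ∀ x y, constRat (x / y) = constRat x / constRat y := map_div₀ _
  constructor
  · intro h
    obtain ⟨x1, x2, x3, x4, x5, x6, x7, h1, h2, h3⟩ := forward_form n hn γ hγ u _ _ _ hu hinj h
    refine ⟨x1 / α ^ 2, x2 / α ^ 2, x3 / α ^ 2, x4 / α ^ 2, x5 / α ^ 2, x6 / α, x7, ?_⟩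
    simp only [Prod.smul_mk, Prod.mk_add_mk, Prod.mk.injEq, hsm, k0, k1, kn, k2, km, ka, ks, kp, kd]
    refine ⟨?_, ?_, ?_⟩
    · apply mul_left_cancel₀ (pow_ne_zero 2 ha)
      rw [h1]; field_simp; ring
    · apply mul_left_cancel₀ ha
      rw [h2]; field_simp; ring
    · rw [h3]; field_simp; ring
  · rintro ⟨x1, x2, x3, x4, x5, x6, x7, h⟩
    simp only [Prod.smul_mk, Prod.mk_add_mk, Prod.mk.injEq, hsm, k0, k1, kn, k2, km, ka, ks, kp,
      kd] at h
    obtain ⟨h1, h2, h3⟩ := h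
    have := ((((((((pres1 hn γ u).smul (x1 * α ^ 2)).add ((pres2 hn γ u).smul (x2 * α ^ 2))).add
      ((pres3 hn γ u).smul (x3 * α ^ 2))).add ((pres4 hn γ u).smul (x4 * α ^ 2))).add
      ((pres5 hn γ u hu).smul (x5 * α ^ 2))).add ((pres6 hn γ hγ u).smul (x6 * α))).add
      ((pres7 γ u).smul x7))
    simp only [km, kp] at this
    change Pres n γ u _ _ _
    convert this using 1
    · rw [h1]; ring
    · rw [h2]; field_simp; ring
    · rw [h3]; field_simp; ring
end
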